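/- Let T be a compactly generated triangulated category with a single compact generator G, and define the generating sequence G by G^n := {Σ^{-n}G} for all n ∈ ℤ. Then: (i) T is weakly approximable (in Neeman's sense) if and only if T is weakly G-approximable; and (ii) T is approximable if and only if T is G-approximable. -/

import Mathlib

namespace GApprox

open CategoryTheory CategoryTheory.Limits CategoryTheory.Pretriangulated

universe w v u

variable (C : Type u) [Category.{v} C] [HasZeroObject C] [HasShift C ℤ]
  [Preadditive C] [∀ n : ℤ, (shiftFunctor C n).Additive] [Pretriangulated C]
  [HasCoproducts.{v} C]

/-- The right orthogonal of a class of objects. -/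
def rOrth (A : Set C) : Set C := {X | ∀ a ∈ A, ∀ f : a ⟶ X, f = 0}

/-- The left orthogonal of a class of objects. -/
def lOrth (A : Set C) : Set C := {X | ∀ a ∈ A, ∀ f : X ⟶ a, f = 0}

/-- `Hom(A, B) = 0`. -/
def homZero (A B : Set C) : Prop := ∀ a ∈ A, ∀ b ∈ B, ∀ f : a ⟶ b, f = 0

/-- The star operation `A ⋆ B`: objects `Y` admitting a distinguished triangle
`X ⟶ Y ⟶ Z ⟶ ΣX` with `X ∈ A` and `Z ∈ B`. -/
def starSet (A B : Set C) : Set C :=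
  {Y | ∃ (X Z : C) (f : X ⟶ Y) (g : Y ⟶ Z) (h : Z ⟶ X⟦(1 : ℤ)⟧),
    Triangle.mk f g h ∈ (distTriang C) ∧ X ∈ A ∧ Z ∈ B}

/-- The (strictly full) shift `Σⁿ A` of a class of objects. -/
def shiftSet (n : ℤ) (A : Set C) : Set C :=
  {X | ∃ a ∈ A, Nonempty (X ≅ (shiftFunctor C n).obj a)}

/-- An object is compact if any map to a coproduct factors through a finite subcoproduct. -/
def IsCompactObj (X : C) : Prop :=
  ∀ (α : Type v) (f : α → C) (g : X ⟶ ∐ f),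
    ∃ (s : Finset α) (h : X ⟶ ∐ (fun i : {a : α // a ∈ s} => f i.1)),
      g = h ≫ Sigma.desc (fun i => Sigma.ι f i.1)

/-- The class of compact objects `T^c`. -/
def compacts : Set C := {X | IsCompactObj C X}

/-- The category is compactly generated. -/
def CompactlyGenerated : Prop :=
  ∀ X : C, (∀ K ∈ compacts C, ∀ f : K ⟶ X, f = 0) → IsZero X

/-- Closure under direct summands (retracts), `smd`. -/
def smd (A : Set C) : Set C :=
  {X | ∃ Y ∈ A, ∃ (i : X ⟶ Y) (r : Y ⟶ X), i ≫ r = 𝟙 X}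

/-- Closure of a class of objects under finite direct sums and extensions (`coprod`). -/
inductive extClosure (U : Set C) : C → Prop
  | of {X : C} : X ∈ U → extClosure U X
  | zero {X : C} : IsZero X → extClosure U X
  | ext {X Y Z : C} (f : X ⟶ Y) (g : Y ⟶ Z) (h : Z ⟶ X⟦(1 : ℤ)⟧) :
      Triangle.mk f g h ∈ (distTriang C) → extClosure U X → extClosure U Z → extClosure U Y

/-- Closure of a class of objects under arbitrary coproducts, extensions and
direct summands. -/
inductive bigClosure (U : Set C) : C → Prop
  | of {X : C} : X ∈ U → bigClosure U X
  | zero {X : C} : IsZero X → bigClosure U X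
  | coprod {α : Type v} (f : α → C) :
      (∀ i, bigClosure U (f i)) → ∀ {X : C}, (X ≅ ∐ f) → bigClosure U X
  | ext {X Y Z : C} (f : X ⟶ Y) (g : Y ⟶ Z) (h : Z ⟶ X⟦(1 : ℤ)⟧) :
      Triangle.mk f g h ∈ (distTriang C) → bigClosure U X → bigClosure U Z → bigClosure U Y
  | retract {X Y : C} (i : X ⟶ Y) (r : Y ⟶ X) :
      i ≫ r = 𝟙 X → bigClosure U Y → bigClosure U X

/-- Closure of a class of objects under finite direct sums, `add`. -/
def addClosure (U : Set C) : Set C :=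
  {X | ∃ (n : ℕ) (f : ULift.{v} (Fin n) → C), (∀ i, f i ∈ U) ∧ Nonempty (X ≅ ∐ f)}

/-- Closure of a class of objects under arbitrary coproducts, `Add`. -/
def bigAddClosure (U : Set C) : Set C :=
  {X | ∃ (α : Type v) (f : α → C), (∀ i, f i ∈ U) ∧ Nonempty (X ≅ ∐ f)}

/-- `coprod_n(U)`. -/
def coprodPow (U : Set C) : ℕ → Set C
  | 0 => {X | IsZero X}
  | n + 1 => starSet C (addClosure C U) (coprodPow U n)

/-- `Coprod_n(U)`. -/
def coprodPowBig (U : Set C) : ℕ → Set C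
  | 0 => {X | IsZero X}
  | n + 1 => starSet C (bigAddClosure C U) (coprodPowBig U n)

/-- `G[a,b] = ∪ { G^m : a ≤ m ≤ b }`. -/
def unionIcc (G : ℤ → Set C) (a b : ℤ) : Set C := ⋃ m ∈ Set.Icc a b, G m

/-- `G(-∞,b] = ∪ { G^m : m ≤ b }`. -/
def unionIic (G : ℤ → Set C) (b : ℤ) : Set C := ⋃ m ∈ Set.Iic b, G m

/-- `G(-∞,∞) = ∪ { G^m : m ∈ ℤ }`. -/
def unionAll (G : ℤ → Set C) : Set C := ⋃ m : ℤ, G m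

/-- `G^{[a,b]} = smd(coprod(G[a,b]))`. -/
def gInt (G : ℤ → Set C) (a b : ℤ) : Set C :=
  smd C {X | extClosure C (unionIcc C G a b) X}

/-- `G^{(-∞,b]} = smd(coprod(G(-∞,b]))`. -/
def gIic (G : ℤ → Set C) (b : ℤ) : Set C :=
  smd C {X | extClosure C (unionIic C G b) X}

/-- `G^{[a,b]}_k = smd(coprod_k(G[a,b]))`. -/
def gIntPow (G : ℤ → Set C) (a b k : ℤ) : Set C :=
  smd C (coprodPow C (unionIcc C G a b) k.toNat)

/-- `Ḡ^{[a,b]}`. -/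
def gBarInt (G : ℤ → Set C) (a b : ℤ) : Set C :=
  {X | bigClosure C (unionIcc C G a b) X}

/-- `Ḡ^{(-∞,b]}`. -/
def gBarIic (G : ℤ → Set C) (b : ℤ) : Set C :=
  {X | bigClosure C (unionIic C G b) X}

/-- `Ḡ^{[a,b]}_k = smd(Coprod_k(G[a,b]))`. -/
def gBarIntPow (G : ℤ → Set C) (a b k : ℤ) : Set C :=
  smd C (coprodPowBig C (unionIcc C G a b) k.toNat)

/-- `M^G_n := G^{(-∞,-n]}`. -/
def MG (G : ℤ → Set C) (n : ℤ) : Set C := gIic C G (-n)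

/-- `R^G_n := ⊥((M^G_n)^⊥)`, orthogonals taken in the whole category. -/
def RG (G : ℤ → Set C) (n : ℤ) : Set C := lOrth C (rOrth C (MG C G n))

/-- A pre-generating sequence. -/
structure IsPreGenSeq (G : ℤ → Set C) : Prop where
  compact : ∀ i : ℤ, G i ⊆ compacts C
  generates : smd C {X | extClosure C (unionAll C G) X} = compacts C

/-- A generating sequence. -/
structure IsGenSeq (G : ℤ → Set C) extends IsPreGenSeq C G : Prop where
  shift_cond : ∀ n : ℤ,
    shiftSet C (-1) (G n) ∪ G n ∪ shiftSet C 1 (G n) ⊆ gInt C G (n - 1) (n + 1)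

/-- A finite generating sequence. -/
structure IsFinGenSeq (G : ℤ → Set C) extends IsGenSeq C G : Prop where
  finite : ∀ i : ℤ, (G i).Finite

/-- ℕ-equivalence of generating sequences. -/
def GenSeqNEquiv (G G' : ℤ → Set C) : Prop :=
  ∃ N : ℤ, 0 ≤ N ∧ (∀ n : ℤ, G' n ⊆ gInt C G (n - N) (n + N)) ∧
    ∀ n : ℤ, G n ⊆ gInt C G' (n - N) (n + N)

/-- ℕ-equivalence of (extended good) metrics. -/
def MetricNEquiv (M N : ℤ → Set C) : Prop :=
  ∃ n : ℤ, 0 ≤ n ∧ (∀ i : ℤ, M (i + n) ⊆ N i) ∧ ∀ i : ℤ, N (i + n) ⊆ M i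

/-- An extended good metric. -/
structure IsExtGoodMetric (M : ℤ → Set C) : Prop where
  zero_mem : ∀ (n : ℤ) (X : C), IsZero X → X ∈ M n
  iso_closed : ∀ (n : ℤ) ⦃X Y : C⦄, (X ≅ Y) → X ∈ M n → Y ∈ M n
  star_subset : ∀ n : ℤ, starSet C (M n) (M n) ⊆ M n
  shift_one : ∀ n : ℤ, shiftSet C 1 (M (n + 1)) ⊆ M n
  antitone : ∀ n : ℤ, M (n + 1) ⊆ M n
  shift_neg_one : ∀ n : ℤ, shiftSet C (-1) (M (n + 1)) ⊆ M n

/-- An orthogonal metric. -/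
structure IsOrthMetric (M : ℤ → Set C) extends IsExtGoodMetric C M : Prop where
  orth : ∀ n : ℤ, lOrth C (rOrth C (M n)) = M n

/-- The closure of the compacts `T̄^c := ∩ₙ T^c ⋆ Rₙ`. -/
def closCompacts (Rm : ℤ → Set C) : Set C := ⋂ n : ℤ, starSet C (compacts C) (Rm n)

/-- `(T, R, A)` is `G`-preapproximable. -/
structure IsGPreApprox (G Rm : ℤ → Set C) (A : ℤ) : Prop where
  orthMetric : IsOrthMetric C Rm
  A_pos : 0 < A
  cond0 : ∀ i : ℤ, MG C G i ⊆ ⋃ n ∈ {n : ℤ | |n| ≤ A}, shiftSet C n (MG C G (i + 1))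
  cond1 : ∀ i : ℤ, MG C G (i + A) ⊆ Rm i ∩ compacts C
  cond2 : ∀ n : ℤ, ∃ N : ℤ, ∀ i : ℤ, N ≤ i → homZero C (G n) (Rm i)

/-- There is a distinguished triangle `E ⟶ F ⟶ D ⟶ ΣE` with `E ∈ S` and `D ∈ D`. -/
def approxTriangle (F : C) (S D : Set C) : Prop :=
  ∃ (E Dd : C) (f : E ⟶ F) (g : F ⟶ Dd) (h : Dd ⟶ E⟦(1 : ℤ)⟧),
    Triangle.mk f g h ∈ (distTriang C) ∧ E ∈ S ∧ Dd ∈ D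

/-- `(T, R, A)` is weakly `G`-approximable. -/
structure IsWeakGApprox (G Rm : ℤ → Set C) (A : ℤ) extends IsGPreApprox C G Rm A : Prop where
  hom_vanish : ∀ n i : ℤ, A ≤ n + i → homZero C (G n) (Rm i)
  approx : ∀ i : ℤ, ∀ F ∈ Rm i,
    approxTriangle C F (gBarInt C G (-A - i) (A - i)) (Rm (i + 1))

/-- `(T, R, A)` is `G`-approximable. -/
structure IsGApprox (G Rm : ℤ → Set C) (A : ℤ) extends IsWeakGApprox C G Rm A : Prop where
  approx' : ∀ i : ℤ, ∀ F ∈ Rm i,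
    approxTriangle C F (gBarIntPow C G (-A - i) (A - i) A) (Rm (i + 1))

/-- `(T, R, A)` is weakly `G`-quasiapproximable. -/
structure IsWeakGQuasiApprox (G Rm : ℤ → Set C) (A : ℤ) extends IsGPreApprox C G Rm A : Prop where
  hom_vanish : ∀ n i : ℤ, A ≤ n + i → homZero C (G n) (Rm i)
  approx : ∀ i : ℤ, ∀ F ∈ Rm i ∩ closCompacts C Rm,
    approxTriangle C F (gBarInt C G (-A - i) (A - i)) (Rm (i + 1) ∩ closCompacts C Rm)

/-- `(T, R, A)` is `G`-quasiapproximable. -/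
structure IsGQuasiApprox (G Rm : ℤ → Set C) (A : ℤ) extends IsWeakGQuasiApprox C G Rm A : Prop where
  approx' : ∀ i : ℤ, ∀ F ∈ Rm i ∩ closCompacts C Rm,
    approxTriangle C F (gBarIntPow C G (-A - i) (A - i) A) (Rm (i + 1) ∩ closCompacts C Rm)

/-- The coproduct of a sequence of objects. -/
noncomputable def seqCoprod (E : ℕ → C) : C := ∐ (fun n : ULift.{v} ℕ => E n.down)

/-- The canonical inclusion into the coproduct of a sequence. -/
noncomputable def seqInj (E : ℕ → C) (n : ℕ) : E n ⟶ seqCoprod C E :=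
  Sigma.ι (fun n : ULift.{v} ℕ => E n.down) (ULift.up n)

/-- The map `1 - shift` on the coproduct of a sequence. -/
noncomputable def oneMinusShift (E : ℕ → C) (e : ∀ n, E n ⟶ E (n + 1)) :
    seqCoprod C E ⟶ seqCoprod C E :=
  Sigma.desc (fun n => seqInj C E n.down - e n.down ≫ seqInj C E (n.down + 1))

/-- `H`, equipped with `π`, `δ`, is a homotopy colimit of the sequence `E`. -/
def IsHocolim (E : ℕ → C) (e : ∀ n, E n ⟶ E (n + 1)) (H : C)
    (π : seqCoprod C E ⟶ H) (δ : H ⟶ (seqCoprod C E)⟦(1 : ℤ)⟧) : Prop :=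
  Triangle.mk (oneMinusShift C E e) π δ ∈ (distTriang C)

/-- A single compact generator. -/
def IsCompactGenerator (G₀ : C) : Prop :=
  IsCompactObj C G₀ ∧ ∀ X : C, (∀ n : ℤ, ∀ f : (shiftFunctor C n).obj G₀ ⟶ X, f = 0) → IsZero X

/-- The strictly full subcategory `{Σʲ G₀}`. -/
def singletonShift (G₀ : C) (j : ℤ) : Set C :=
  {X | Nonempty (X ≅ (shiftFunctor C j).obj G₀)}

/-- The generating sequence `Gⁿ := {Σ⁻ⁿ G₀}`. -/
def genSeqNeg (G₀ : C) (n : ℤ) : Set C := singletonShift C G₀ (-n)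

/-- The generating sequence `Gⁿ := {Σⁿ G₀}`. -/
def genSeqPos (G₀ : C) (n : ℤ) : Set C := singletonShift C G₀ n

/-- A t-structure `(T^{≤0}, T^{≥0}) = (U, V)`. -/
structure IsTStructure (U V : Set C) : Prop where
  iso_closed_le : ∀ ⦃X Y : C⦄, (X ≅ Y) → X ∈ U → Y ∈ U
  iso_closed_ge : ∀ ⦃X Y : C⦄, (X ≅ Y) → X ∈ V → Y ∈ V
  shift_le : shiftSet C 1 U ⊆ U
  shift_ge : V ⊆ shiftSet C 1 V
  orthogonal : homZero C U (shiftSet C (-1) V)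
  exists_triangle : ∀ t : C, ∃ (u v : C) (f : u ⟶ t) (g : t ⟶ v) (h : v ⟶ u⟦(1 : ℤ)⟧),
    Triangle.mk f g h ∈ (distTriang C) ∧ u ∈ U ∧ v ∈ shiftSet C (-1) V

/-- `T` is weakly approximable in the sense of Neeman, with respect to the compact
generator `G₀`. -/
def WeaklyApproximable (G₀ : C) : Prop :=
  ∃ (A : ℤ) (U V : Set C), 0 < A ∧ IsTStructure C U V ∧
    (shiftFunctor C A).obj G₀ ∈ U ∧
    (∀ i : ℤ, A ≤ i → ∀ u ∈ U, ∀ f : (shiftFunctor C (-i)).obj G₀ ⟶ u, f = 0) ∧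
    ∀ F ∈ U, approxTriangle C F (gBarInt C (genSeqPos C G₀) (-A) A) (shiftSet C 1 U)

/-- `T` is approximable in the sense of Neeman, with respect to the compact generator `G₀`. -/
def Approximable (G₀ : C) : Prop :=
  ∃ (A : ℤ) (U V : Set C), 0 < A ∧ IsTStructure C U V ∧
    (shiftFunctor C A).obj G₀ ∈ U ∧
    (∀ i : ℤ, A ≤ i → ∀ u ∈ U, ∀ f : (shiftFunctor C (-i)).obj G₀ ⟶ u, f = 0) ∧
    ∀ F ∈ U, approxTriangle C F (gBarIntPow C (genSeqPos C G₀) (-A) A A) (shiftSet C 1 U)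

/-!
Given a t-structure as in Neeman's definition, put `Rₙ = Σⁿ T^{≤0}`. This is an orthogonal metric
because an aisle is the left orthogonal of its coaisle, and the triangles required at level `n` are
the `n`-th shifts of the triangles available for `T^{≤0}`.

Conversely, let `U = ⊥((M^G_A)^⊥)` be the aisle generated by the `Σᵐ G` with `m ≥ A`; it is
contained in `R₀`. Starting from `F ∈ Rᵢ`, the approximating triangles give a tower
`F ⟶ F₁ ⟶ F₂ ⟶ ⋯` with `Fₖ ∈ Rᵢ₊ₖ`. Its homotopy colimit vanishes because `Hom(Σʲ G, Rₖ) = 0` for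
large `k`, and the cells attached have no maps to `(M^G_{i-A})^⊥`; hence `Rᵢ ⊆ ⊥((M^G_{i-A})^⊥)`, in
particular `R_{2A+1} ⊆ ΣU`. Peeling off `2A + 1` triangles therefore approximates any `F ∈ R₀`
modulo `ΣU` by an iterated extension of cells in a bounded range.

The octahedral axiom is not available, so composites of approximating triangles are formed by
pulling back along `W' ⟶ F'`, and only the consequence `Hom(fib p, Y) = 0` of the missing
octahedron is recorded for the resulting map `p : W ⟶ F`. When the cells are controlled only up to a
direct summand `E` of `E ⊞ Z`, one approximates `F ⊞ Z` instead and splits `Z` off again.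
-/

section Orthogonality

variable {C}
omit [HasZeroObject C] [HasShift C ℤ] [∀ n : ℤ, (shiftFunctor C n).Additive] [Pretriangulated C]
  [HasCoproducts.{v} C]

/-- `Hom(X, Y) = 0`, for a single pair of objects. -/
def HomVanishes (X Y : C) : Prop := ∀ f : X ⟶ Y, f = 0

lemma homVanishes_of_isZero {X : C} (hX : IsZero X) (Y : C) : HomVanishes X Y :=
  fun f => hX.eq_of_src f 0

lemma HomVanishes.of_retract {X X' Y : C} (h : HomVanishes X' Y) {i : X ⟶ X'} {r : X' ⟶ X}
    (hir : i ≫ r = 𝟙 X) : HomVanishes X Y := fun f => by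
  rw [← Category.id_comp f, ← hir, Category.assoc, h (r ≫ f), comp_zero]

lemma homVanishes_congr {X X' Y Y' : C} (e : X ≅ X') (e' : Y ≅ Y') :
    HomVanishes X Y ↔ HomVanishes X' Y' := by
  refine ⟨fun h f => ?_, fun h f => ?_⟩
  · rw [← cancel_epi e.hom, ← cancel_mono e'.inv, h ((e.hom ≫ f) ≫ e'.inv), comp_zero, zero_comp]
  · rw [← cancel_epi e.inv, ← cancel_mono e'.hom, h ((e.inv ≫ f) ≫ e'.hom), comp_zero, zero_comp]

lemma lOrth_anti {A B : Set C} (h : A ⊆ B) : lOrth C B ⊆ lOrth C A :=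
  fun _ hX a ha => hX a (h ha)

lemma rOrth_anti {A B : Set C} (h : A ⊆ B) : rOrth C B ⊆ rOrth C A :=
  fun _ hX a ha => hX a (h ha)

lemma subset_lOrth_rOrth (A : Set C) : A ⊆ lOrth C (rOrth C A) :=
  fun _ hX _ hY => hY _ hX

lemma lOrth_rOrth_lOrth (B : Set C) : lOrth C (rOrth C (lOrth C B)) = lOrth C B :=
  (lOrth_anti fun _ hY _ hX => hX _ hY).antisymm (subset_lOrth_rOrth _)

lemma mem_lOrth_congr (B : Set C) {X X' : C} (e : X ≅ X') : X ∈ lOrth C B ↔ X' ∈ lOrth C B :=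
  forall₂_congr fun Y _ => homVanishes_congr e (Iso.refl Y)

lemma mem_rOrth_congr (A : Set C) {Y Y' : C} (e : Y ≅ Y') : Y ∈ rOrth C A ↔ Y' ∈ rOrth C A :=
  forall₂_congr fun X _ => homVanishes_congr (Iso.refl X) e

end Orthogonality

section Shift

variable {C}
omit [HasZeroObject C] [Pretriangulated C] [HasCoproducts.{v} C]

lemma homVanishes_shift_shift_iff (X Y : C) (n : ℤ) :
    HomVanishes (X⟦n⟧) (Y⟦n⟧) ↔ HomVanishes X Y := by
  refine ⟨fun h f => ?_, fun h f => ?_⟩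
  · exact (shiftFunctor C n).map_injective ((h _).trans (Functor.map_zero _ _ _).symm)
  · obtain ⟨g, rfl⟩ := (shiftFunctor C n).map_surjective f
    rw [h g, Functor.map_zero]

lemma homVanishes_shift_iff (X Y : C) {n m : ℤ} (h : n + m = 0) :
    HomVanishes (X⟦n⟧) Y ↔ HomVanishes X (Y⟦m⟧) := by
  rw [← homVanishes_shift_shift_iff X _ n]
  exact homVanishes_congr (Iso.refl _)
    ((shiftFunctorCompIsoId C m n (by omega)).symm.app Y)

omit [Preadditive C] [∀ n : ℤ, (shiftFunctor C n).Additive] in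
lemma mem_shiftSet_iff {A : Set C} (hA : ∀ ⦃X Y : C⦄, (X ≅ Y) → X ∈ A → Y ∈ A) {n m : ℤ}
    (h : n + m = 0) {X : C} : X ∈ shiftSet C n A ↔ X⟦m⟧ ∈ A := by
  refine ⟨fun ⟨a, ha, ⟨e⟩⟩ => ?_, fun hX => ⟨_, hX, ?_⟩⟩
  · exact hA (((shiftFunctor C m).mapIso e).trans ((shiftFunctorCompIsoId C n m h).app a)).symm ha
  · exact ⟨((shiftFunctorCompIsoId C m n (by omega)).app X).symm⟩

/-- `Hom(fib p, Y) = 0` for the homotopy fibre `fib p` of `p`, expressed without choosing a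
triangle: by the long exact sequence of `Hom(-, Y)` it says that precomposition with `p` is
surjective on maps to `Y` and injective on maps to `ΣY`. -/
def FibreOrth {W F : C} (p : W ⟶ F) (Y : C) : Prop :=
  (∀ ψ : W ⟶ Y, ∃ ψ' : F ⟶ Y, ψ = p ≫ ψ') ∧ ∀ χ : F ⟶ Y⟦(1 : ℤ)⟧, p ≫ χ = 0 → χ = 0

omit [∀ n : ℤ, (shiftFunctor C n).Additive] in
lemma fibreOrth_zero {W F Y : C} (hW : IsZero W) (hF : HomVanishes F (Y⟦(1 : ℤ)⟧)) :
    FibreOrth (0 : W ⟶ F) Y :=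
  ⟨fun _ => ⟨0, hW.eq_of_src _ _⟩, fun χ _ => hF χ⟩

omit [∀ n : ℤ, (shiftFunctor C n).Additive] in
lemma FibreOrth.iso_comp {W W' F Y : C} {p : W ⟶ F} (H : FibreOrth p Y) (e : W' ≅ W) :
    FibreOrth (e.hom ≫ p) Y := by
  refine ⟨fun ψ => ?_, fun χ hχ => H.2 χ ?_⟩
  · obtain ⟨ψ', hψ'⟩ := H.1 (e.inv ≫ ψ)
    exact ⟨ψ', by rw [Category.assoc, ← hψ', Iso.hom_inv_id_assoc]⟩
  · rwa [← cancel_epi e.hom, comp_zero, ← Category.assoc]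

end Shift

section Triangles

variable {C}
omit [HasCoproducts.{v} C]

lemma HomVanishes.ext {X Y Z W : C} {f : X ⟶ Y} {g : Y ⟶ Z} {h : Z ⟶ X⟦(1 : ℤ)⟧}
    (hT : Triangle.mk f g h ∈ distTriang C) (hX : HomVanishes X W) (hZ : HomVanishes Z W) :
    HomVanishes Y W := fun φ => by
  obtain ⟨ψ, rfl⟩ : ∃ ψ : Z ⟶ W, φ = g ≫ ψ := Triangle.yoneda_exact₂ _ hT φ (hX _)
  rw [hZ ψ, comp_zero]

lemma exists_extension {X Y Z W : C} {f : X ⟶ Y} {g : Y ⟶ Z} {h : Z ⟶ X⟦(1 : ℤ)⟧}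
    (hT : Triangle.mk f g h ∈ distTriang C) (φ : X ⟶ W) (hφ : h ≫ φ⟦(1 : ℤ)⟧' = 0) :
    ∃ ψ : Y ⟶ W, φ = f ≫ ψ := by
  obtain ⟨ν, hν⟩ : ∃ ν : Y⟦(1 : ℤ)⟧ ⟶ W⟦(1 : ℤ)⟧, φ⟦(1 : ℤ)⟧' = (-f⟦(1 : ℤ)⟧') ≫ ν :=
    Triangle.yoneda_exact₃ _ (rot_of_distTriang _ hT) _ hφ
  obtain ⟨ψ, hψ⟩ := (shiftFunctor C (1 : ℤ)).map_surjective (-ν)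
  refine ⟨ψ, (shiftFunctor C (1 : ℤ)).map_injective ?_⟩
  rw [Functor.map_comp, hψ, hν, Preadditive.neg_comp, Preadditive.comp_neg]

lemma exists_factor_connecting {X Y Z W : C} {f : X ⟶ Y} {g : Y ⟶ Z} {h : Z ⟶ X⟦(1 : ℤ)⟧}
    (hT : Triangle.mk f g h ∈ distTriang C) (χ : Z ⟶ W⟦(1 : ℤ)⟧) (hχ : g ≫ χ = 0) :
    ∃ φ : X ⟶ W, χ = h ≫ φ⟦(1 : ℤ)⟧' := by
  obtain ⟨κ, hκ⟩ : ∃ κ : X⟦(1 : ℤ)⟧ ⟶ W⟦(1 : ℤ)⟧, χ = h ≫ κ := Triangle.yoneda_exact₃ _ hT χ hχ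
  obtain ⟨φ, rfl⟩ := (shiftFunctor C (1 : ℤ)).map_surjective κ
  exact ⟨φ, hκ⟩

lemma fibreOrth_iff_cone {X Y Z W : C} {f : X ⟶ Y} {g : Y ⟶ Z} {h : Z ⟶ X⟦(1 : ℤ)⟧}
    (hT : Triangle.mk f g h ∈ distTriang C) :
    FibreOrth f W ↔ HomVanishes Z (W⟦(1 : ℤ)⟧) := by
  have hfg : f ≫ g = 0 := comp_distTriang_mor_zero₁₂ _ hT
  have hhf : h ≫ f⟦(1 : ℤ)⟧' = 0 := comp_distTriang_mor_zero₃₁ _ hT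
  refine ⟨fun ⟨hsurj, hinj⟩ χ => ?_, fun hZ => ⟨fun ψ => exists_extension hT ψ (hZ _), ?_⟩⟩
  · obtain ⟨φ, rfl⟩ := exists_factor_connecting hT χ
      (hinj _ (by rw [reassoc_of% hfg, zero_comp]))
    obtain ⟨φ', rfl⟩ := hsurj φ
    rw [Functor.map_comp, reassoc_of% hhf, zero_comp]
  · intro χ hχ
    obtain ⟨κ, rfl⟩ : ∃ κ : Z ⟶ W⟦(1 : ℤ)⟧, χ = g ≫ κ := Triangle.yoneda_exact₂ _ hT χ hχ
    rw [hZ κ, comp_zero]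

lemma fibreOrth_iff_fibre {X Y Z W : C} {f : X ⟶ Y} {g : Y ⟶ Z} {h : Z ⟶ X⟦(1 : ℤ)⟧}
    (hT : Triangle.mk f g h ∈ distTriang C) : FibreOrth g W ↔ HomVanishes X W := by
  rw [← homVanishes_shift_shift_iff X W 1]
  exact fibreOrth_iff_cone (rot_of_distTriang _ hT)

section SharedFirstVertex

variable {X Y Y' Z Z' W : C} {f : X ⟶ Y} {g : Y ⟶ Z} {h : Z ⟶ X⟦(1 : ℤ)⟧}
  {f' : X ⟶ Y'} {g' : Y' ⟶ Z'} {h' : Z' ⟶ X⟦(1 : ℤ)⟧} {b : Y ⟶ Y'} {c : Z ⟶ Z'}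

-- In a triangulated category `b` and `c` have isomorphic fibres; this lemma and the next one
-- give the part of that statement which survives without the octahedral axiom.
lemma FibreOrth.middle_of_third (hT : Triangle.mk f g h ∈ distTriang C)
    (hT' : Triangle.mk f' g' h' ∈ distTriang C) (hf : f ≫ b = f') (hg : b ≫ g' = g ≫ c)
    (hh : c ≫ h' = h) (H : FibreOrth c W) : FibreOrth b W := by
  have hgh : g' ≫ h' = 0 := comp_distTriang_mor_zero₂₃ _ hT'
  have hhf : h ≫ f⟦(1 : ℤ)⟧' = 0 := comp_distTriang_mor_zero₃₁ _ hT
  refine ⟨fun ψ => ?_, fun χ hχ => ?_⟩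
  · obtain ⟨ν, hν⟩ := exists_extension hT' (f ≫ ψ) <| H.2 _ <| by
      rw [Functor.map_comp, reassoc_of% hh, reassoc_of% hhf, zero_comp]
    obtain ⟨l, hl⟩ : ∃ l : Z ⟶ W, ψ - b ≫ ν = g ≫ l := Triangle.yoneda_exact₂ _ hT _ <| by
      change f ≫ (ψ - b ≫ ν) = 0
      rw [Preadditive.comp_sub, hν, reassoc_of% hf, sub_self]
    obtain ⟨l', rfl⟩ := H.1 l
    exact ⟨ν + g' ≫ l', by rw [Preadditive.comp_add, reassoc_of% hg, ← hl, add_sub_cancel]⟩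
  · obtain ⟨θ, rfl⟩ : ∃ θ : Z' ⟶ W⟦(1 : ℤ)⟧, χ = g' ≫ θ := Triangle.yoneda_exact₂ _ hT' χ <| by
      change f' ≫ χ = 0
      rw [← hf, Category.assoc, hχ, comp_zero]
    obtain ⟨κ, hκ⟩ := exists_factor_connecting hT (c ≫ θ) (by rw [← hχ, reassoc_of% hg])
    have hθ : θ - h' ≫ κ⟦(1 : ℤ)⟧' = 0 := H.2 _ <| by
      rw [Preadditive.comp_sub, reassoc_of% hh, hκ, sub_self]
    rw [sub_eq_zero.1 hθ, reassoc_of% hgh, zero_comp]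

lemma FibreOrth.third_of_middle (hT : Triangle.mk f g h ∈ distTriang C)
    (hT' : Triangle.mk f' g' h' ∈ distTriang C) (hf : f ≫ b = f') (hg : b ≫ g' = g ≫ c)
    (hh : c ≫ h' = h) (H : FibreOrth b W) : FibreOrth c W := by
  have hfg : f ≫ g = 0 := comp_distTriang_mor_zero₁₂ _ hT
  have hhf : h' ≫ f'⟦(1 : ℤ)⟧' = 0 := comp_distTriang_mor_zero₃₁ _ hT'
  refine ⟨fun ψ => ?_, fun χ hχ => ?_⟩
  · obtain ⟨ν, hν⟩ := H.1 (g ≫ ψ)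
    obtain ⟨ν', rfl⟩ : ∃ ν' : Z' ⟶ W, ν = g' ≫ ν' := Triangle.yoneda_exact₂ _ hT' ν <| by
      change f' ≫ ν = 0
      rw [← hf, Category.assoc, ← hν, reassoc_of% hfg, zero_comp]
    obtain ⟨κ, hκ⟩ : ∃ κ : X⟦(1 : ℤ)⟧ ⟶ W, ψ - c ≫ ν' = h ≫ κ :=
      Triangle.yoneda_exact₃ _ hT _ <| by
        change g ≫ (ψ - c ≫ ν') = 0
        rw [Preadditive.comp_sub, hν, reassoc_of% hg, sub_self]
    exact ⟨ν' + h' ≫ κ, by rw [Preadditive.comp_add, reassoc_of% hh, ← hκ, add_sub_cancel]⟩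
  · obtain ⟨ρ, rfl⟩ := exists_factor_connecting hT' χ <| H.2 _ <| by
      rw [reassoc_of% hg, hχ, comp_zero]
    obtain ⟨ρ', rfl⟩ := exists_extension hT ρ (by rw [← hh, Category.assoc, hχ])
    obtain ⟨ρ'', rfl⟩ := H.1 ρ'
    rw [reassoc_of% hf, Functor.map_comp, reassoc_of% hhf, zero_comp]

end SharedFirstVertex

lemma FibreOrth.biprod_map_id {E F Y : C} {f : E ⟶ F} (H : FibreOrth f Y) (Z : C) :
    FibreOrth (biprod.map f (𝟙 Z)) Y := by
  refine ⟨fun ψ => ?_, fun χ hχ => ?_⟩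
  · obtain ⟨ψ', hψ'⟩ := H.1 (biprod.inl ≫ ψ)
    exact ⟨biprod.desc ψ' (biprod.inr ≫ ψ), by ext <;> simp [hψ']⟩
  · have hl : biprod.inl ≫ χ = 0 := H.2 _ <| by
      rw [← biprod.inl_map_assoc f (𝟙 Z), hχ, comp_zero]
    have hr : biprod.inr ≫ χ = 0 := by
      rw [← Category.id_comp (biprod.inr ≫ χ), ← biprod.inr_map_assoc f (𝟙 Z), hχ, comp_zero]
    ext
    · rw [hl, comp_zero]
    · rw [hr, comp_zero]

lemma FibreOrth.of_biprod {W₀ F Z Y : C} {p : Z ⊞ W₀ ⟶ F ⊞ Z} (H : FibreOrth p Y)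
    (hp : biprod.inl ≫ p = biprod.inr) : FibreOrth (biprod.inr ≫ p ≫ biprod.fst) Y := by
  refine ⟨fun ψ => ?_, fun χ hχ => ?_⟩
  · obtain ⟨ψ', hψ'⟩ := H.1 (biprod.snd ≫ ψ)
    have hr : biprod.inr ≫ ψ' = 0 := by
      rw [← hp, Category.assoc, ← hψ', biprod.inl_snd_assoc, zero_comp]
    have hdesc : ψ' = biprod.fst ≫ biprod.inl ≫ ψ' := by ext <;> simp [hr]
    exact ⟨biprod.inl ≫ ψ', by
      rw [Category.assoc, Category.assoc, ← hdesc, ← hψ', biprod.inr_snd_assoc]⟩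
  · have hfst : p ≫ biprod.fst ≫ χ = 0 := by
      ext
      · rw [reassoc_of% hp, biprod.inr_fst_assoc, zero_comp, comp_zero]
      · rw [comp_zero, ← hχ, Category.assoc, Category.assoc]
    rw [← biprod.inl_fst_assoc (Y := Z) χ, H.2 _ hfst, comp_zero]

lemma exists_iso_biprod_of_retract {X Y : C} {i : X ⟶ Y} {r : Y ⟶ X} (hir : i ≫ r = 𝟙 X) :
    ∃ (Z : C) (e : Y ≅ X ⊞ Z), i ≫ e.hom = biprod.inl := by
  obtain ⟨Z, g, d, hT⟩ := distinguished_cocone_triangle i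
  have hdi : d ≫ i⟦(1 : ℤ)⟧' = 0 := comp_distTriang_mor_zero₃₁ _ hT
  have hd : d = 0 := by
    rw [← Category.comp_id d, ← CategoryTheory.Functor.map_id, ← hir, Functor.map_comp,
      reassoc_of% hdi, zero_comp]
  obtain ⟨e, he, -⟩ := exists_iso_binaryBiproduct_of_distTriang _ hT hd
  exact ⟨Z, e, he⟩

lemma isIso_of_comp_triangle {X Y Z : C} {f : X ⟶ Y} {g : Y ⟶ Z} {h : Z ⟶ X⟦(1 : ℤ)⟧}
    (hT : Triangle.mk f g h ∈ distTriang C) {a : Y ⟶ Y} (hf : f ≫ a = f) (hg : a ≫ g = g) :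
    IsIso a :=
  let φ : Triangle.mk f g h ⟶ Triangle.mk f g h :=
    { hom₁ := 𝟙 X
      hom₂ := a
      hom₃ := 𝟙 Z
      comm₁ := hf.trans (Category.id_comp f).symm
      comm₂ := (Category.comp_id g).trans hg.symm
      comm₃ := by
        change h ≫ (𝟙 X)⟦(1 : ℤ)⟧' = 𝟙 Z ≫ h
        rw [CategoryTheory.Functor.map_id, Category.comp_id, Category.id_comp] }
  isIso₂_of_isIso₁₃ φ hT hT (inferInstanceAs (IsIso (𝟙 X))) (inferInstanceAs (IsIso (𝟙 Z)))

omit [HasZeroObject C] [HasShift C ℤ] [Preadditive C] [∀ n : ℤ, (shiftFunctor C n).Additive]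
  [Pretriangulated C] in
lemma smd_of_retract {A : Set C} {X Y : C} (hY : Y ∈ smd C A) {i : X ⟶ Y} {r : Y ⟶ X}
    (hir : i ≫ r = 𝟙 X) : X ∈ smd C A := by
  obtain ⟨Z, hZ, j, s, hjs⟩ := hY
  exact ⟨Z, hZ, i ≫ j, s ≫ r, by rw [Category.assoc, reassoc_of% hjs, hir]⟩

lemma mem_smd_starSet {A B : Set C} {X W Z : C} {f : X ⟶ W} {g : W ⟶ Z} {h : Z ⟶ X⟦(1 : ℤ)⟧}
    (hT : Triangle.mk f g h ∈ distTriang C) (hX : X ∈ A) (hZ : Z ∈ smd C B) :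
    W ∈ smd C (starSet C A B) := by
  obtain ⟨Z', hZ', j, r, hjr⟩ := hZ
  obtain ⟨W', f', g', hT'⟩ := distinguished_cocone_triangle₂ (r ≫ h)
  obtain ⟨a, ha, ha'⟩ : ∃ a : W ⟶ W', f ≫ a = 𝟙 X ≫ f' ∧ g ≫ j = a ≫ g' :=
    complete_distinguished_triangle_morphism₂ _ _ hT hT' (𝟙 X) j <| by
      change h ≫ (𝟙 X)⟦(1 : ℤ)⟧' = j ≫ r ≫ h
      rw [CategoryTheory.Functor.map_id, Category.comp_id, reassoc_of% hjr]
  obtain ⟨b, hb, hb'⟩ : ∃ b : W' ⟶ W, f' ≫ b = 𝟙 X ≫ f ∧ g' ≫ r = b ≫ g :=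
    complete_distinguished_triangle_morphism₂ _ _ hT' hT (𝟙 X) r <| by
      change (r ≫ h) ≫ (𝟙 X)⟦(1 : ℤ)⟧' = r ≫ h
      rw [CategoryTheory.Functor.map_id, Category.comp_id]
  have : IsIso (a ≫ b) := by
    refine isIso_of_comp_triangle hT ?_ ?_
    · rw [reassoc_of% ha, hb, Category.id_comp]
    · rw [Category.assoc, ← hb', ← reassoc_of% ha', hjr, Category.comp_id]
  exact ⟨W', ⟨X, Z', f', g', _, hT', hX, hZ'⟩, a, b ≫ inv (a ≫ b), by
    rw [← Category.assoc, IsIso.hom_inv_id]⟩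

end Triangles

section Compact

variable {C}

section FinProj

omit [HasZeroObject C] [HasShift C ℤ] [∀ n : ℤ, (shiftFunctor C n).Additive] [Pretriangulated C]
variable {α : Type v} [DecidableEq α] (f : α → C)

/-- The idempotent of `∐ f` projecting onto the finite subcoproduct indexed by `s`. An object is
compact exactly when each of its maps to a coproduct is fixed by some `finProj`. -/
noncomputable def finProj (s : Finset α) : ∐ f ⟶ ∐ f :=
  Sigma.desc fun i => if i ∈ s then Sigma.ι f i else 0

lemma ι_finProj (s : Finset α) (i : α) :
    Sigma.ι f i ≫ finProj f s = if i ∈ s then Sigma.ι f i else 0 :=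
  Sigma.ι_desc _ _

lemma finProj_comp_finProj {s t : Finset α} (h : s ⊆ t) :
    finProj f s ≫ finProj f t = finProj f s := by
  refine Sigma.hom_ext _ _ fun i => ?_
  rw [← Category.assoc, ι_finProj]
  split_ifs with hi
  · rw [ι_finProj, if_pos (h hi)]
  · rw [zero_comp]

lemma finProj_empty : finProj f ∅ = 0 :=
  Sigma.hom_ext _ _ fun i => by
    rw [ι_finProj, if_neg (Finset.notMem_empty i), comp_zero]

lemma finProj_insert {s : Finset α} {a : α} (ha : a ∉ s) :
    finProj f (insert a s) = Sigma.π f a ≫ Sigma.ι f a + finProj f s := by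
  refine Sigma.hom_ext _ _ fun i => ?_
  rw [Preadditive.comp_add, ι_finProj, ι_finProj]
  obtain rfl | hi := eq_or_ne i a
  · rw [if_pos (Finset.mem_insert_self _ _), if_neg ha, add_zero, ← Category.assoc,
      Sigma.ι_π_eq_id, Category.id_comp]
  · rw [← Category.assoc, Sigma.ι_π_of_ne _ hi, zero_comp, zero_add]
    simp only [Finset.mem_insert, hi, false_or]

lemma finProj_π_of_notMem {s : Finset α} {a : α} (ha : a ∉ s) :
    finProj f s ≫ Sigma.π f a = 0 := by
  refine Sigma.hom_ext _ _ fun i => ?_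
  rw [← Category.assoc, ι_finProj, comp_zero]
  split_ifs with hi
  · exact Sigma.ι_π_of_ne _ fun h => ha (h ▸ hi)
  · rw [zero_comp]

lemma map_finProj (F : C ⥤ C) [F.PreservesZeroMorphisms] [PreservesColimit (Discrete.functor f) F]
    (s : Finset α) :
    F.map (finProj f s) = (PreservesCoproduct.iso F f).hom ≫
      finProj (fun i => F.obj (f i)) s ≫ (PreservesCoproduct.iso F f).inv := by
  rw [← Iso.inv_comp_eq]
  refine Sigma.hom_ext _ _ fun i => ?_
  rw [PreservesCoproduct.inv_hom, ι_comp_sigmaComparison_assoc, ← F.map_comp, ι_finProj,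
    ← Category.assoc, ι_finProj]
  split_ifs
  · rw [ι_comp_sigmaComparison]
  · rw [F.map_zero, zero_comp]

end FinProj

lemma isCompactObj_iff {K : C} : IsCompactObj C K ↔ ∀ (α : Type v) [DecidableEq α] (f : α → C)
    (g : K ⟶ ∐ f), ∃ s : Finset α, g ≫ finProj f s = g := by
  refine ⟨fun hK α _ f g => ?_, fun hK α f g => ?_⟩
  · obtain ⟨s, h, rfl⟩ := hK α f g
    refine ⟨s, ?_⟩
    rw [Category.assoc]
    congr 1
    refine Sigma.hom_ext _ _ fun i => ?_
    rw [Sigma.ι_desc_assoc, Sigma.ι_desc, ι_finProj, if_pos i.2]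
  · classical
    obtain ⟨s, hs⟩ := hK α f g
    let restrict : ∐ f ⟶ ∐ fun i : {a : α // a ∈ s} => f i.1 := Sigma.desc fun i =>
      if hi : i ∈ s then Sigma.ι (fun i : {a : α // a ∈ s} => f i.1) ⟨i, hi⟩ else 0
    have hrestrict : restrict ≫ Sigma.desc (fun i => Sigma.ι f i.1) = finProj f s := by
      refine Sigma.hom_ext _ _ fun i => ?_
      rw [Sigma.ι_desc_assoc, ι_finProj]
      split_ifs
      · rw [Sigma.ι_desc]
      · rw [zero_comp]
    exact ⟨s, g ≫ restrict, by rw [Category.assoc, hrestrict, hs]⟩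

lemma hom_coproduct_induction {K : C} (hK : IsCompactObj C K) {α : Type v} [DecidableEq α]
    {f : α → C} (g : K ⟶ ∐ f) {P : (K ⟶ ∐ f) → Prop} (zero : P 0)
    (add : ∀ x y, P x → P y → P (x + y)) (ι : ∀ i, P ((g ≫ Sigma.π f i) ≫ Sigma.ι f i)) : P g := by
  obtain ⟨s, hs⟩ := isCompactObj_iff.1 hK α f g
  rw [← hs]
  clear hs
  induction s using Finset.induction_on with
  | empty => rwa [finProj_empty, comp_zero]
  | insert a s ha ih =>
    rw [finProj_insert f ha, Preadditive.comp_add, ← Category.assoc]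
    exact add _ _ (ι a) ih

lemma isCompactObj_of_isZero {X : C} (hX : IsZero X) : IsCompactObj C X :=
  isCompactObj_iff.2 fun _ _ _ _ => ⟨∅, hX.eq_of_src _ _⟩

lemma isCompactObj_of_retract {X Y : C} (hY : IsCompactObj C Y) {i : X ⟶ Y} {r : Y ⟶ X}
    (hir : i ≫ r = 𝟙 X) : IsCompactObj C X := by
  refine isCompactObj_iff.2 fun α _ f g => ?_
  obtain ⟨s, hs⟩ := isCompactObj_iff.1 hY α f (r ≫ g)
  refine ⟨s, ?_⟩
  rw [← Category.id_comp g, ← hir, Category.assoc, Category.assoc, ← Category.assoc r, hs,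
    Category.assoc]

lemma isCompactObj_congr {X Y : C} (e : X ≅ Y) : IsCompactObj C X ↔ IsCompactObj C Y :=
  ⟨fun h => isCompactObj_of_retract h e.inv_hom_id, fun h => isCompactObj_of_retract h e.hom_inv_id⟩

lemma isCompactObj_of_distTriang {X Y Z : C} {f : X ⟶ Y} {g : Y ⟶ Z} {h : Z ⟶ X⟦(1 : ℤ)⟧}
    (hT : Triangle.mk f g h ∈ distTriang C) (hX : IsCompactObj C X) (hZ : IsCompactObj C Z) :
    IsCompactObj C Y := by
  refine isCompactObj_iff.2 fun α _ F φ => ?_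
  obtain ⟨s, hs⟩ := isCompactObj_iff.1 hX α F (f ≫ φ)
  obtain ⟨ψ, hψ⟩ : ∃ ψ : Z ⟶ ∐ F, φ - φ ≫ finProj F s = g ≫ ψ :=
    Triangle.yoneda_exact₂ _ hT _ <| by
      change f ≫ (φ - φ ≫ finProj F s) = 0
      rw [Preadditive.comp_sub, ← Category.assoc, hs, sub_self]
  obtain ⟨t, ht⟩ := isCompactObj_iff.1 hZ α F ψ
  have hψt : ψ ≫ finProj F (s ∪ t) = ψ := by
    rw [← ht, Category.assoc, finProj_comp_finProj F Finset.subset_union_right]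
  refine ⟨s ∪ t, ?_⟩
  rw [← sub_add_cancel φ (φ ≫ finProj F s), hψ, Preadditive.add_comp, Category.assoc,
    Category.assoc, hψt, finProj_comp_finProj F Finset.subset_union_left]

lemma isCompactObj_shift {K : C} (hK : IsCompactObj C K) (n : ℤ) : IsCompactObj C (K⟦n⟧) := by
  refine isCompactObj_iff.2 fun α _ f g => ?_
  let F := shiftFunctor C (-n)
  let c := PreservesCoproduct.iso F f
  have hFK : IsCompactObj C (F.obj (K⟦n⟧)) := (isCompactObj_congr (shiftShiftNeg K n)).2 hK
  obtain ⟨s, hs⟩ := isCompactObj_iff.1 hFK α _ (F.map g ≫ c.hom)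
  refine ⟨s, F.map_injective ?_⟩
  rw [F.map_comp, map_finProj, reassoc_of% hs, Iso.hom_inv_id, Category.comp_id]

end Compact

section Hocolim

variable {C}

section SeqCoprod

omit [HasZeroObject C] [HasShift C ℤ] [∀ n : ℤ, (shiftFunctor C n).Additive] [Pretriangulated C]
variable (E : ℕ → C)

/-- The projection from the coproduct of a sequence onto one of its terms. -/
noncomputable def seqPi (n : ℕ) : seqCoprod C E ⟶ E n :=
  Sigma.π (fun n : ULift.{v} ℕ => E n.down) (ULift.up n)

/-- The map out of the coproduct of a sequence with prescribed restrictions to the terms. -/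
noncomputable def seqDesc {Y : C} (f : ∀ n, E n ⟶ Y) : seqCoprod C E ⟶ Y :=
  Sigma.desc fun n => f n.down

lemma seqInj_pi_self (n : ℕ) : seqInj C E n ≫ seqPi E n = 𝟙 _ :=
  Sigma.ι_π_eq_id (fun n : ULift.{v} ℕ => E n.down) (ULift.up n)

lemma seqInj_pi_of_ne {n m : ℕ} (h : n ≠ m) : seqInj C E n ≫ seqPi E m = 0 :=
  Sigma.ι_π_of_ne (fun n : ULift.{v} ℕ => E n.down) fun h' => h (congrArg ULift.down h')

variable {E}

omit [Preadditive C] in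
lemma seqInj_desc {Y : C} (f : ∀ n, E n ⟶ Y) (n : ℕ) : seqInj C E n ≫ seqDesc E f = f n :=
  Sigma.ι_desc _ _

omit [Preadditive C] in
lemma seqCoprod_hom_ext {Y : C} {f g : seqCoprod C E ⟶ Y}
    (h : ∀ n, seqInj C E n ≫ f = seqInj C E n ≫ g) : f = g :=
  Sigma.hom_ext _ _ fun n => h n.down

variable (e : ∀ n, E n ⟶ E (n + 1))

lemma seqInj_oneMinusShift (n : ℕ) :
    seqInj C E n ≫ oneMinusShift C E e = seqInj C E n - e n ≫ seqInj C E (n + 1) :=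
  Sigma.ι_desc _ _

lemma oneMinusShift_pi_zero : oneMinusShift C E e ≫ seqPi E 0 = seqPi E 0 :=
  seqCoprod_hom_ext fun n => by
    rw [← Category.assoc, seqInj_oneMinusShift, Preadditive.sub_comp, Category.assoc,
      seqInj_pi_of_ne E n.succ_ne_zero, comp_zero, sub_zero]

lemma oneMinusShift_pi_succ (m : ℕ) :
    oneMinusShift C E e ≫ seqPi E (m + 1) = seqPi E (m + 1) - seqPi E m ≫ e m := by
  refine seqCoprod_hom_ext fun n => ?_
  rw [← Category.assoc, seqInj_oneMinusShift, Preadditive.sub_comp, Preadditive.comp_sub,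
    Category.assoc, ← Category.assoc _ _ (e m)]
  obtain rfl | h := eq_or_ne n m
  · rw [seqInj_pi_self, seqInj_pi_self, Category.id_comp, Category.comp_id]
  · rw [seqInj_pi_of_ne E h, seqInj_pi_of_ne E (Nat.succ_injective.ne h), comp_zero, zero_comp]

lemma oneMinusShift_comp_seqDesc {Y : C} (f : ∀ n, E n ⟶ Y) :
    oneMinusShift C E e ≫ seqDesc E f = seqDesc E fun n => f n - e n ≫ f (n + 1) :=
  seqCoprod_hom_ext fun n => by
    rw [← Category.assoc, seqInj_oneMinusShift, Preadditive.sub_comp, Category.assoc, seqInj_desc,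
      seqInj_desc, seqInj_desc]

end SeqCoprod

variable {E : ℕ → C} {e : ∀ n, E n ⟶ E (n + 1)} {K H : C} {π : seqCoprod C E ⟶ H}
  {δ : H ⟶ (seqCoprod C E)⟦(1 : ℤ)⟧}

lemma hom_seqCoprod_induction (hK : IsCompactObj C K) (g : K ⟶ seqCoprod C E)
    {P : (K ⟶ seqCoprod C E) → Prop} (zero : P 0) (add : ∀ x y, P x → P y → P (x + y))
    (seqInj : ∀ n, P ((g ≫ seqPi E n) ≫ seqInj C E n)) : P g :=
  hom_coproduct_induction hK g zero add fun n => seqInj n.down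

lemma eq_zero_of_comp_oneMinusShift (hK : IsCompactObj C K) {g : K ⟶ seqCoprod C E}
    (hg : g ≫ oneMinusShift C E e = 0) : g = 0 := by
  have hπ : ∀ n, g ≫ seqPi E n = 0 := by
    intro n
    induction n with
    | zero => rw [← oneMinusShift_pi_zero e, reassoc_of% hg, zero_comp]
    | succ n ih =>
      rw [← sub_add_cancel (seqPi E (n + 1)) (seqPi E n ≫ e n), ← oneMinusShift_pi_succ,
        Preadditive.comp_add, reassoc_of% hg, reassoc_of% ih, zero_comp, zero_comp, add_zero]
  refine hom_seqCoprod_induction hK g (P := (· = 0)) rfl (fun x y hx hy => ?_) fun n => ?_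
  · rw [hx, hy, add_zero]
  · rw [hπ, zero_comp]

lemma exists_comp_seqPi_eq_zero (hK : IsCompactObj C K) (g : K ⟶ seqCoprod C E) :
    ∃ N, g ≫ seqPi E N = 0 := by
  obtain ⟨N, p, hp, hpN⟩ : ∃ N, ∃ p : seqCoprod C E ⟶ seqCoprod C E,
      g ≫ p = g ∧ p ≫ seqPi E N = 0 := by
    obtain ⟨s, hs⟩ := isCompactObj_iff.1 hK _ _ g
    obtain ⟨N, hN⟩ := Infinite.exists_notMem_finset s
    exact ⟨N.down, finProj _ s, hs, finProj_π_of_notMem _ hN⟩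
  exact ⟨N, by rw [← hp, Category.assoc, hpN, comp_zero]⟩

lemma homVanishes_hocolim (hH : IsHocolim C E e H π δ) (hK : IsCompactObj C K)
    (hE : ∀ n (x : K ⟶ E n), x ≫ seqInj C E n ≫ π = 0) : HomVanishes K H := fun f => by
  have hδ : δ ≫ (oneMinusShift C E e)⟦(1 : ℤ)⟧' = 0 := comp_distTriang_mor_zero₃₁ _ hH
  have hfδ : f ≫ δ = 0 := by
    let κ : (K⟦(-1 : ℤ)⟧)⟦(1 : ℤ)⟧ ≅ K := shiftNegShift K 1
    obtain ⟨g, hg⟩ := (shiftFunctor C (1 : ℤ)).map_surjective (κ.hom ≫ f ≫ δ)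
    have hg0 : g = 0 := eq_zero_of_comp_oneMinusShift (isCompactObj_shift hK _) <|
      (shiftFunctor C (1 : ℤ)).map_injective <| by
        rw [Functor.map_comp, hg, Functor.map_zero, Category.assoc, Category.assoc, hδ, comp_zero,
          comp_zero]
    rw [← cancel_epi κ.hom, ← hg, hg0, Functor.map_zero, comp_zero]
  obtain ⟨g, rfl⟩ : ∃ g : K ⟶ seqCoprod C E, f = g ≫ π := Triangle.coyoneda_exact₃ _ hH f hfδ
  refine hom_seqCoprod_induction hK g (P := (· ≫ π = 0)) zero_comp (fun x y hx hy => ?_) fun n => ?_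
  · rw [Preadditive.add_comp, hx, hy, add_zero]
  · rw [Category.assoc, hE]

lemma exists_eventually_zero_of_comp_hocolim (hH : IsHocolim C E e H π δ) (hK : IsCompactObj C K)
    (f : K ⟶ E 0) (hf : f ≫ seqInj C E 0 ≫ π = 0) :
    ∃ g : ∀ n, K ⟶ E n, g 0 = f ∧ (∀ n, g (n + 1) = g n ≫ e n) ∧ ∃ N, g N = 0 := by
  obtain ⟨g, hg⟩ : ∃ g : K ⟶ seqCoprod C E, f ≫ seqInj C E 0 = g ≫ oneMinusShift C E e :=
    Triangle.coyoneda_exact₂ _ hH _ ((Category.assoc _ _ _).trans hf)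
  refine ⟨fun n => g ≫ seqPi E n, ?_, fun n => ?_, exists_comp_seqPi_eq_zero hK g⟩
  · change g ≫ seqPi E 0 = f
    rw [← oneMinusShift_pi_zero e, ← reassoc_of% hg, seqInj_pi_self, Category.comp_id]
  · rw [Category.assoc, ← sub_eq_zero, ← Preadditive.comp_sub, ← oneMinusShift_pi_succ,
      ← reassoc_of% hg, seqInj_pi_of_ne E n.succ_ne_zero.symm, comp_zero]

lemma IsHocolim.seqInj_comp (hH : IsHocolim C E e H π δ) (n : ℕ) :
    seqInj C E n ≫ π = e n ≫ seqInj C E (n + 1) ≫ π := by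
  have hπ : oneMinusShift C E e ≫ π = 0 := comp_distTriang_mor_zero₁₂ _ hH
  rw [← sub_eq_zero, ← Category.assoc (e n), ← Preadditive.sub_comp, ← seqInj_oneMinusShift,
    Category.assoc, hπ, comp_zero]

lemma IsHocolim.exists_desc (hH : IsHocolim C E e H π δ) {Y : C} (θ : ∀ n, E n ⟶ Y)
    (hθ : ∀ n, θ n = e n ≫ θ (n + 1)) : ∃ ψ : H ⟶ Y, ∀ n, seqInj C E n ≫ π ≫ ψ = θ n := by
  obtain ⟨ψ, hψ⟩ : ∃ ψ : H ⟶ Y, seqDesc E θ = π ≫ ψ := Triangle.yoneda_exact₂ _ hH _ <| by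
    change oneMinusShift C E e ≫ seqDesc E θ = 0
    rw [oneMinusShift_comp_seqDesc]
    exact seqCoprod_hom_ext fun n => by rw [seqInj_desc, ← hθ, sub_self, comp_zero]
  exact ⟨ψ, fun n => by rw [← hψ, seqInj_desc]⟩

lemma IsHocolim.fibreOrth (hH : IsHocolim C E e H π δ) {Y : C}
    (hE : ∀ n, FibreOrth (e n) Y) : FibreOrth (seqInj C E 0 ≫ π) Y := by
  have hδ : δ ≫ (oneMinusShift C E e)⟦(1 : ℤ)⟧' = 0 := comp_distTriang_mor_zero₃₁ _ hH
  choose lift hlift using fun n => (hE n).1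
  refine ⟨fun ψ => ?_, fun χ hχ => ?_⟩
  · obtain ⟨ψ', hψ'⟩ := hH.exists_desc (Nat.rec ψ lift) fun n => hlift n _
    exact ⟨ψ', ((Category.assoc _ _ _).trans (hψ' 0)).symm⟩
  · have hχ' : ∀ n, seqInj C E n ≫ π ≫ χ = 0 := by
      intro n
      induction n with
      | zero => rwa [← Category.assoc]
      | succ n ih => exact (hE n).2 _ (by rw [← ih, ← Category.assoc, ← Category.assoc,
          Category.assoc (e n), ← hH.seqInj_comp, Category.assoc])
    obtain ⟨μ, rfl⟩ := exists_factor_connecting hH χ (seqCoprod_hom_ext fun n => by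
      rw [hχ', comp_zero])
    -- The restrictions of `μ` extend successively, so `μ` factors through `1 - shift`.
    let ν : ∀ n, E n ⟶ Y := Nat.rec 0 fun n x => lift n (x - seqInj C E n ≫ μ)
    have hν : ∀ n, ν n - seqInj C E n ≫ μ = e n ≫ ν (n + 1) := fun n => hlift n _
    have hμ : μ = oneMinusShift C E e ≫ seqDesc E ν := by
      rw [oneMinusShift_comp_seqDesc]
      exact seqCoprod_hom_ext fun n => by rw [seqInj_desc, ← hν, sub_sub_cancel]
    rw [hμ, Functor.map_comp, reassoc_of% hδ, zero_comp]

end Hocolim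

section KillingTower

variable {C}

omit [HasZeroObject C] [HasShift C ℤ] [∀ n : ℤ, (shiftFunctor C n).Additive] [Pretriangulated C] in
lemma homVanishes_sigma {α : Type v} {f : α → C} {Y : C} (h : ∀ i, HomVanishes (f i) Y) :
    HomVanishes (∐ f) Y := fun φ => Sigma.hom_ext _ _ fun i => by rw [h i (_ ≫ φ), comp_zero]

variable {J : Type v} (Q : J → C)

/-- The coproduct of the `Q j`, with one copy of `Q j` for each map `Q j ⟶ X`. -/
noncomputable def evalCoprod (X : C) : C := ∐ fun i : Σ j, (Q j ⟶ X) => Q i.1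

/-- The evaluation map, through which every map from some `Q j` to `X` factors. -/
noncomputable def evalMap (X : C) : evalCoprod Q X ⟶ X := Sigma.desc fun i => i.2

/-- The cone of the evaluation map. -/
noncomputable def evalCone (X : C) : C := (distinguished_cocone_triangle (evalMap Q X)).choose

/-- The canonical map from `X` to the cone of its evaluation map. -/
noncomputable def toEvalCone (X : C) : X ⟶ evalCone Q X :=
  (distinguished_cocone_triangle (evalMap Q X)).choose_spec.choose

lemma exists_evalTriangle (X : C) : ∃ h : evalCone Q X ⟶ (evalCoprod Q X)⟦(1 : ℤ)⟧,
    Triangle.mk (evalMap Q X) (toEvalCone Q X) h ∈ distTriang C :=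
  (distinguished_cocone_triangle (evalMap Q X)).choose_spec.choose_spec

variable {Q}

lemma comp_toEvalCone {X : C} {j : J} (x : Q j ⟶ X) : x ≫ toEvalCone Q X = 0 := by
  obtain ⟨h, hT⟩ := exists_evalTriangle Q X
  have hab : evalMap Q X ≫ toEvalCone Q X = 0 := comp_distTriang_mor_zero₁₂ _ hT
  obtain ⟨y, rfl⟩ : ∃ y : Q j ⟶ evalCoprod Q X, y ≫ evalMap Q X = x :=
    ⟨Sigma.ι (fun i : Σ j, (Q j ⟶ X) => Q i.1) ⟨j, x⟩, Sigma.ι_desc _ _⟩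
  rw [Category.assoc, hab, comp_zero]

lemma fibreOrth_toEvalCone {Y : C} (hY : ∀ j, HomVanishes (Q j) Y) (X : C) :
    FibreOrth (toEvalCone Q X) Y := by
  obtain ⟨h, hT⟩ := exists_evalTriangle Q X
  exact (fibreOrth_iff_fibre hT).2 (homVanishes_sigma fun i => hY i.1)

variable (Q) in
/-- The tower obtained from `X` by iterating `evalCone Q`. -/
noncomputable def killTower (X : C) : ℕ → C
  | 0 => X
  | n + 1 => evalCone Q (killTower X n)

variable (Q) in
/-- The transition maps of `killTower`. -/
noncomputable def killTowerMap (X : C) (n : ℕ) : killTower Q X n ⟶ killTower Q X (n + 1) :=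
  toEvalCone Q (killTower Q X n)

lemma homVanishes_hocolim_killTower (hQ : ∀ j, IsCompactObj C (Q j)) {X H : C}
    {π : seqCoprod C (killTower Q X) ⟶ H} {δ : H ⟶ (seqCoprod C (killTower Q X))⟦(1 : ℤ)⟧}
    (hH : IsHocolim C (killTower Q X) (killTowerMap Q X) H π δ) (j : J) : HomVanishes (Q j) H :=
  homVanishes_hocolim hH (hQ j) fun n x => by
    have hx : x ≫ killTowerMap Q X n = 0 := comp_toEvalCone x
    rw [hH.seqInj_comp, reassoc_of% hx, zero_comp]

lemma exists_truncation_triangle (hQ : ∀ j, IsCompactObj C (Q j)) (t : C) :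
    ∃ (u v : C) (f : u ⟶ t) (g : t ⟶ v) (h : v ⟶ u⟦(1 : ℤ)⟧), Triangle.mk f g h ∈ distTriang C ∧
      (∀ Y, (∀ j, HomVanishes (Q j) Y) → HomVanishes u Y) ∧ ∀ j, HomVanishes (Q j) v := by
  obtain ⟨v, π, δ, hH⟩ := distinguished_cocone_triangle
    (oneMinusShift C (killTower Q t) (killTowerMap Q t))
  let g : t ⟶ v := seqInj C (killTower Q t) 0 ≫ π
  obtain ⟨u, f, h, hT⟩ := distinguished_cocone_triangle₁ g
  refine ⟨u, v, f, g, h, hT, fun Y hY => ?_, homVanishes_hocolim_killTower hQ hH⟩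
  exact (fibreOrth_iff_fibre hT).1 <|
    IsHocolim.fibreOrth hH fun n => fibreOrth_toEvalCone hY (killTower Q t n)

end KillingTower

section FactorsThroughExt

variable {C}

/-- The map `φ` factors through an object of the extension closure of `U`. -/
def FactorsThroughExt (U : Set C) {X Y : C} (φ : X ⟶ Y) : Prop :=
  ∃ (W : C) (u : X ⟶ W) (v : W ⟶ Y), extClosure C U W ∧ φ = u ≫ v

variable {U : Set C}

omit [HasCoproducts.{v} C] in
lemma FactorsThroughExt.zero {X Y : C} : FactorsThroughExt U (0 : X ⟶ Y) :=
  ⟨_, 0, 0, extClosure.zero (isZero_zero C), zero_comp.symm⟩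

omit [HasCoproducts.{v} C] in
lemma FactorsThroughExt.add {X Y : C} {φ ψ : X ⟶ Y} (hφ : FactorsThroughExt U φ)
    (hψ : FactorsThroughExt U ψ) : FactorsThroughExt U (φ + ψ) := by
  obtain ⟨W, u, v, hW, rfl⟩ := hφ
  obtain ⟨W', u', v', hW', rfl⟩ := hψ
  exact ⟨W ⊞ W', biprod.lift u u', biprod.desc v v',
    extClosure.ext _ _ _ (binaryBiproductTriangle_distinguished W W') hW hW',
    biprod.lift_desc.symm⟩

omit [HasCoproducts.{v} C] in
lemma FactorsThroughExt.comp {X Y Z : C} {φ : X ⟶ Y} (hφ : FactorsThroughExt U φ) (a : Y ⟶ Z) :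
    FactorsThroughExt U (φ ≫ a) := by
  obtain ⟨W, u, v, hW, rfl⟩ := hφ
  exact ⟨W, u, v ≫ a, hW, Category.assoc _ _ _⟩

lemma isCompactObj_of_extClosure (hU : U ⊆ compacts C) {X : C} (hX : extClosure C U X) :
    IsCompactObj C X := by
  induction hX with
  | of h => exact hU h
  | zero h => exact isCompactObj_of_isZero h
  | ext f g h hT _ _ ihX ihZ => exact isCompactObj_of_distTriang hT ihX ihZ

lemma factorsThroughExt_evalCoprod {J : Type v} {Q : J → C} (hQ : ∀ j, Q j ∈ U) {K : C}
    (hK : IsCompactObj C K) {X : C} (g : K ⟶ evalCoprod Q X) : FactorsThroughExt U g := by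
  classical
  exact hom_coproduct_induction hK g FactorsThroughExt.zero (fun _ _ => FactorsThroughExt.add)
    fun i => ⟨Q i.1, _, _, extClosure.of (hQ i.1), rfl⟩

lemma exists_factor_through_shift {P R : C}
    (hP : ∀ K, IsCompactObj C K → ∀ g : K ⟶ P, FactorsThroughExt U g) (hR : IsCompactObj C R)
    (θ : R ⟶ P⟦(1 : ℤ)⟧) : ∃ (P₀ : C) (y : R ⟶ P₀⟦(1 : ℤ)⟧) (p : P₀ ⟶ P),
      extClosure C U P₀ ∧ θ = y ≫ p⟦(1 : ℤ)⟧' := by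
  let κ : (R⟦(-1 : ℤ)⟧)⟦(1 : ℤ)⟧ ≅ R := shiftNegShift R 1
  obtain ⟨θ', hθ'⟩ := (shiftFunctor C (1 : ℤ)).map_surjective (κ.hom ≫ θ)
  obtain ⟨P₀, y, p, hP₀, rfl⟩ := hP _ (isCompactObj_shift hR (-1)) θ'
  refine ⟨P₀, κ.inv ≫ y⟦(1 : ℤ)⟧', p, hP₀, ?_⟩
  rw [Category.assoc, ← Functor.map_comp, hθ', Iso.inv_hom_id_assoc]

lemma FactorsThroughExt.of_comp (hU : U ⊆ compacts C) {P X N : C} {a : P ⟶ X} {b : X ⟶ N}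
    {c : N ⟶ P⟦(1 : ℤ)⟧} (hT : Triangle.mk a b c ∈ distTriang C)
    (hP : ∀ K, IsCompactObj C K → ∀ g : K ⟶ P, FactorsThroughExt U g) {K : C}
    (hK : IsCompactObj C K) {x : K ⟶ X} (hx : FactorsThroughExt U (x ≫ b)) :
    FactorsThroughExt U x := by
  have hbc : b ≫ c = 0 := comp_distTriang_mor_zero₂₃ _ hT
  obtain ⟨W₁, u, w, hW₁, huw⟩ := hx
  obtain ⟨R, q, r, hR⟩ := distinguished_cocone_triangle u
  have huq : u ≫ q = 0 := comp_distTriang_mor_zero₁₂ _ hR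
  have hRc : IsCompactObj C R := isCompactObj_of_distTriang (rot_of_distTriang _ hR)
    (isCompactObj_of_extClosure hU hW₁) (isCompactObj_shift hK 1)
  obtain ⟨θ, hθ⟩ : ∃ θ : R ⟶ P⟦(1 : ℤ)⟧, w ≫ c = q ≫ θ := Triangle.yoneda_exact₂ _ hR _ <| by
    change u ≫ w ≫ c = 0
    rw [← reassoc_of% huw, hbc, comp_zero]
  obtain ⟨P₀, y, p, hP₀, rfl⟩ := exists_factor_through_shift hP hRc θ
  obtain ⟨W, i, k, hW⟩ := distinguished_cocone_triangle₂ (q ≫ y)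
  obtain ⟨m, -, hm⟩ : ∃ m : W ⟶ X, i ≫ m = p ≫ a ∧ k ≫ w = m ≫ b :=
    complete_distinguished_triangle_morphism₂ _ _ hW hT p w <| by
      change (q ≫ y) ≫ p⟦(1 : ℤ)⟧' = w ≫ c
      rw [Category.assoc, hθ]
  obtain ⟨s, rfl⟩ : ∃ s : K ⟶ W, u = s ≫ k := Triangle.coyoneda_exact₃ _ hW _ <| by
    change u ≫ q ≫ y = 0
    rw [reassoc_of% huq, zero_comp]
  obtain ⟨z, hz⟩ : ∃ z : K ⟶ P, x - s ≫ m = z ≫ a := Triangle.coyoneda_exact₂ _ hT _ <| by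
    change (x - s ≫ m) ≫ b = 0
    rw [Preadditive.sub_comp, huw, Category.assoc, Category.assoc, ← hm, sub_self]
  rw [← sub_add_cancel x (s ≫ m), hz]
  exact ((hP K hK z).comp a).add ⟨W, s, m, extClosure.ext _ _ _ hW hP₀ hW₁, rfl⟩

lemma mem_smd_extClosure_of_isCompactObj (hU : U ⊆ compacts C) {J : Type v} {Q : J → C}
    (hQ : ∀ j, Q j ∈ U) (hgen : ∀ X, (∀ j, HomVanishes (Q j) X) → IsZero X) {K : C}
    (hK : IsCompactObj C K) : K ∈ smd C {X | extClosure C U X} := by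
  obtain ⟨H, π, δ, hH⟩ := distinguished_cocone_triangle
    (oneMinusShift C (killTower Q K) (killTowerMap Q K))
  have hH0 : IsZero H := hgen H (homVanishes_hocolim_killTower (fun j => hU (hQ j)) hH)
  obtain ⟨g, hg0, hg, N, hN⟩ := exists_eventually_zero_of_comp_hocolim hH hK (𝟙 K)
    (hH0.eq_of_tgt _ _)
  have hfac : FactorsThroughExt U (g 0) := by
    refine Nat.decreasingInduction (motive := fun n _ => FactorsThroughExt U (g n))
      (fun n _ ih => ?_) (hN ▸ FactorsThroughExt.zero) N.zero_le
    obtain ⟨h, hT⟩ := exists_evalTriangle Q (killTower Q K n)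
    exact FactorsThroughExt.of_comp hU hT
      (fun _ hL f => factorsThroughExt_evalCoprod hQ hL f) hK (hg n ▸ ih)
  rw [hg0] at hfac
  obtain ⟨W, u, w, hW, huw⟩ := hfac
  exact ⟨W, hW, u, w, huw.symm⟩

end FactorsThroughExt

section Closures

variable {C}

omit [HasCoproducts.{v} C] in
lemma exists_shift_triangle {X Y Z : C} {f : X ⟶ Y} {g : Y ⟶ Z} {h : Z ⟶ X⟦(1 : ℤ)⟧}
    (hT : Triangle.mk f g h ∈ distTriang C) (n : ℤ) :
    ∃ (f' : X⟦n⟧ ⟶ Y⟦n⟧) (g' : Y⟦n⟧ ⟶ Z⟦n⟧) (h' : Z⟦n⟧ ⟶ (X⟦n⟧)⟦(1 : ℤ)⟧),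
      Triangle.mk f' g' h' ∈ distTriang C :=
  ⟨_, _, _, Triangle.shift_distinguished _ hT n⟩

omit [HasZeroObject C] [HasShift C ℤ] [Preadditive C] [∀ n : ℤ, (shiftFunctor C n).Additive]
  [Pretriangulated C] [HasCoproducts.{v} C] in
lemma smd_mono {U U' : Set C} (h : U ⊆ U') : smd C U ⊆ smd C U' :=
  fun _ ⟨Y, hY, r⟩ => ⟨Y, h hY, r⟩

lemma bigClosure_mono {U U' : Set C} (h : U ⊆ U') {X : C} (hX : bigClosure C U X) :
    bigClosure C U' X := by
  induction hX with
  | of hX => exact .of (h hX)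
  | zero hX => exact .zero hX
  | coprod f _ e ih => exact .coprod f ih e
  | ext f g h hT _ _ ihX ihZ => exact .ext f g h hT ihX ihZ
  | retract i r hir _ ih => exact .retract i r hir ih

lemma coprodPowBig_mono {U U' : Set C} (h : U ⊆ U') (k : ℕ) :
    coprodPowBig C U k ⊆ coprodPowBig C U' k := by
  induction k with
  | zero => exact subset_rfl
  | succ k ih =>
    rintro Y ⟨X, Z, f, g, d, hT, ⟨α, φ, hφ, e⟩, hZ⟩
    exact ⟨X, Z, f, g, d, hT, ⟨α, φ, fun i => h (hφ i), e⟩, ih hZ⟩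

section ShiftClosures

variable {U U' : Set C} {n : ℤ}

omit [HasZeroObject C] [Preadditive C] [∀ n : ℤ, (shiftFunctor C n).Additive]
  [Pretriangulated C] [HasCoproducts.{v} C] in
lemma shift_mem_smd (h : ∀ X ∈ U, X⟦n⟧ ∈ U') {X : C} (hX : X ∈ smd C U) : X⟦n⟧ ∈ smd C U' := by
  obtain ⟨Y, hY, i, r, hir⟩ := hX
  exact ⟨_, h _ hY, i⟦n⟧', r⟦n⟧', by rw [← Functor.map_comp, hir, CategoryTheory.Functor.map_id]⟩

omit [HasCoproducts.{v} C] in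
lemma extClosure_shift (h : ∀ X ∈ U, X⟦n⟧ ∈ U') {X : C} (hX : extClosure C U X) :
    extClosure C U' (X⟦n⟧) := by
  induction hX with
  | of hX => exact .of (h _ hX)
  | zero hX => exact .zero ((shiftFunctor C n).map_isZero hX)
  | ext f g d hT _ _ ihX ihZ =>
    obtain ⟨f', g', d', hT'⟩ := exists_shift_triangle hT n
    exact .ext f' g' d' hT' ihX ihZ

lemma bigClosure_shift (h : ∀ X ∈ U, X⟦n⟧ ∈ U') {X : C} (hX : bigClosure C U X) :
    bigClosure C U' (X⟦n⟧) := by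
  induction hX with
  | of hX => exact .of (h _ hX)
  | zero hX => exact .zero ((shiftFunctor C n).map_isZero hX)
  | coprod f _ e ih =>
    exact .coprod (fun i => (f i)⟦n⟧) ih
      (((shiftFunctor C n).mapIso e).trans (PreservesCoproduct.iso (shiftFunctor C n) f))
  | ext f g d hT _ _ ihX ihZ =>
    obtain ⟨f', g', d', hT'⟩ := exists_shift_triangle hT n
    exact .ext f' g' d' hT' ihX ihZ
  | retract i r hir _ ih =>
    exact .retract (i⟦n⟧') (r⟦n⟧')
      (by rw [← Functor.map_comp, hir, CategoryTheory.Functor.map_id]) ih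

lemma shift_mem_coprodPowBig (h : ∀ X ∈ U, X⟦n⟧ ∈ U') (k : ℕ) :
    ∀ X ∈ coprodPowBig C U k, X⟦n⟧ ∈ coprodPowBig C U' k := by
  induction k with
  | zero => exact fun _ hX => (shiftFunctor C n).map_isZero hX
  | succ k ih =>
    rintro Y ⟨X, Z, f, g, d, hT, ⟨α, φ, hφ, ⟨e⟩⟩, hZ⟩
    obtain ⟨f', g', d', hT'⟩ := exists_shift_triangle hT n
    exact ⟨_, _, f', g', d', hT', ⟨α, fun i => (φ i)⟦n⟧, fun i => h _ (hφ i),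
      ⟨((shiftFunctor C n).mapIso e).trans (PreservesCoproduct.iso (shiftFunctor C n) φ)⟩⟩,
      ih _ hZ⟩

end ShiftClosures

lemma bigClosure_of_mem_coprodPowBig {U : Set C} {k : ℕ} :
    ∀ X ∈ coprodPowBig C U k, bigClosure C U X := by
  induction k with
  | zero => exact fun _ hX => .zero hX
  | succ k ih =>
    rintro Y ⟨X, Z, f, g, d, hT, ⟨α, φ, hφ, ⟨e⟩⟩, hZ⟩
    exact .ext f g d hT (.coprod φ (fun i => .of (hφ i)) e) (ih _ hZ)

lemma bigClosure_of_mem_smd_coprodPowBig {U : Set C} {k : ℕ} {X : C}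
    (hX : X ∈ smd C (coprodPowBig C U k)) : bigClosure C U X := by
  obtain ⟨Y, hY, i, r, hir⟩ := hX
  exact .retract i r hir (bigClosure_of_mem_coprodPowBig Y hY)

omit [HasCoproducts.{v} C] in
lemma homVanishes_of_extClosure {U : Set C} {X Y : C} (hU : ∀ X ∈ U, HomVanishes X Y)
    (hX : extClosure C U X) : HomVanishes X Y := by
  induction hX with
  | of hX => exact hU _ hX
  | zero hX => exact homVanishes_of_isZero hX Y
  | ext _ _ _ hT _ _ ihX ihZ => exact .ext hT ihX ihZ

lemma homVanishes_of_bigClosure {U : Set C} {X Y : C} (hU : ∀ X ∈ U, HomVanishes X Y)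
    (hX : bigClosure C U X) : HomVanishes X Y := by
  induction hX with
  | of hX => exact hU _ hX
  | zero hX => exact homVanishes_of_isZero hX Y
  | coprod f _ e ih => exact (homVanishes_congr e (Iso.refl Y)).2 (homVanishes_sigma ih)
  | ext _ _ _ hT _ _ ihX ihZ => exact .ext hT ihX ihZ
  | retract _ _ hir _ ih => exact ih.of_retract hir

end Closures

section GeneratingSequence

variable {C}

omit [HasCoproducts.{v} C] in
lemma unionIic_subset_MG (G : ℤ → Set C) (n : ℤ) : unionIic C G (-n) ⊆ MG C G n :=
  fun X hX => ⟨X, .of hX, 𝟙 X, 𝟙 X, Category.comp_id _⟩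

omit [HasCoproducts.{v} C] in
lemma rOrth_MG (G : ℤ → Set C) (n : ℤ) :
    rOrth C (MG C G n) = rOrth C (unionIic C G (-n)) := by
  refine (rOrth_anti (unionIic_subset_MG G n)).antisymm fun Y hY X hX => ?_
  obtain ⟨Z, hZ, i, r, hir⟩ := hX
  exact (homVanishes_of_extClosure hY hZ).of_retract hir

lemma smd_extClosure_subset_compacts {U : Set C} (hU : U ⊆ compacts C) :
    smd C {X | extClosure C U X} ⊆ compacts C := by
  rintro X ⟨Y, hY, i, r, hir⟩
  exact isCompactObj_of_retract (isCompactObj_of_extClosure hU hY) hir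

variable {G₀ : C}

section Membership

omit [HasZeroObject C] [∀ n : ℤ, (shiftFunctor C n).Additive] [Preadditive C] [Pretriangulated C]
  [HasCoproducts.{v} C]

lemma shift_mem_genSeqNeg (G₀ : C) (m : ℤ) : G₀⟦m⟧ ∈ genSeqNeg C G₀ (-m) :=
  ⟨eqToIso (by rw [neg_neg])⟩

lemma mem_genSeqPos_iff {X : C} {m : ℤ} : X ∈ genSeqPos C G₀ m ↔ X ∈ genSeqNeg C G₀ (-m) := by
  simp only [genSeqPos, genSeqNeg, neg_neg]

lemma genSeqNeg_shift {X : C} {m n k : ℤ} (h : k + n = m) (hX : X ∈ genSeqNeg C G₀ m) :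
    X⟦n⟧ ∈ genSeqNeg C G₀ k := by
  obtain ⟨e⟩ := hX
  exact ⟨((shiftFunctor C n).mapIso e).trans
    ((shiftFunctorAdd' C (-m) n (-k) (by omega)).symm.app G₀)⟩

lemma unionIcc_genSeqNeg_shift (a b n : ℤ) : ∀ X ∈ unionIcc C (genSeqNeg C G₀) a b,
    X⟦n⟧ ∈ unionIcc C (genSeqNeg C G₀) (a - n) (b - n) := by
  simp only [unionIcc, Set.mem_iUnion₂, Set.mem_Icc]
  rintro X ⟨m, hm, hX⟩
  exact ⟨m - n, by omega, genSeqNeg_shift (by omega) hX⟩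

lemma unionIcc_genSeqPos (A : ℤ) :
    unionIcc C (genSeqPos C G₀) (-A) A = unionIcc C (genSeqNeg C G₀) (-A) A := by
  ext X
  simp only [unionIcc, Set.mem_iUnion₂, Set.mem_Icc]
  constructor
  · rintro ⟨m, hm, hX⟩
    exact ⟨-m, by omega, mem_genSeqPos_iff.1 hX⟩
  · rintro ⟨m, hm, hX⟩
    exact ⟨-m, by omega, mem_genSeqPos_iff.2 (by rwa [neg_neg])⟩

omit [Category.{v} C] [HasShift C ℤ] in
lemma unionIcc_mono (G : ℤ → Set C) {a b a' b' : ℤ} (ha : a' ≤ a) (hb : b ≤ b') :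
    unionIcc C G a b ⊆ unionIcc C G a' b' :=
  Set.biUnion_subset_biUnion_left (Set.Icc_subset_Icc ha hb)

end Membership

lemma genSeqNeg_subset_compacts (hG : IsCompactObj C G₀) (n : ℤ) :
    genSeqNeg C G₀ n ⊆ compacts C :=
  fun _ ⟨e⟩ => (isCompactObj_congr e).2 (isCompactObj_shift hG _)

lemma MG_genSeqNeg_subset_compacts (hG : IsCompactObj C G₀) (a : ℤ) :
    MG C (genSeqNeg C G₀) a ⊆ compacts C :=
  smd_extClosure_subset_compacts (Set.iUnion₂_subset fun n _ => genSeqNeg_subset_compacts hG n)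

omit [HasCoproducts.{v} C] in
lemma shift_mem_MG {a m : ℤ} (h : a ≤ m) : G₀⟦m⟧ ∈ MG C (genSeqNeg C G₀) a :=
  unionIic_subset_MG _ _ <|
    Set.mem_biUnion (Set.mem_Iic.2 (neg_le_neg h)) (shift_mem_genSeqNeg G₀ m)

omit [HasCoproducts.{v} C] in
lemma mem_rOrth_MG_genSeqNeg {a : ℤ} {Y : C} :
    Y ∈ rOrth C (MG C (genSeqNeg C G₀) a) ↔ ∀ m, a ≤ m → HomVanishes (G₀⟦m⟧) Y := by
  refine ⟨fun hY m hm => hY _ (shift_mem_MG hm), fun hY => ?_⟩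
  rw [rOrth_MG]
  intro X hX
  obtain ⟨m, hm, ⟨e⟩⟩ := Set.mem_iUnion₂.1 hX
  rw [Set.mem_Iic] at hm
  exact (homVanishes_congr e (Iso.refl Y)).2 (hY (-m) (by omega))

omit [HasCoproducts.{v} C] in
lemma MG_genSeqNeg_shift {X : C} {a b n : ℤ} (h : a + n = b) (hX : X ∈ MG C (genSeqNeg C G₀) a) :
    X⟦n⟧ ∈ MG C (genSeqNeg C G₀) b := by
  refine shift_mem_smd (fun Y hY => extClosure_shift ?_ hY) hX
  simp only [unionIic, Set.mem_iUnion₂, Set.mem_Iic]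
  rintro Z ⟨m, hm, hZ⟩
  exact ⟨m - n, by omega, genSeqNeg_shift (by omega) hZ⟩

omit [HasCoproducts.{v} C] in
lemma rOrth_MG_genSeqNeg_shift {Y : C} {a b n : ℤ} (h : a + n = b)
    (hY : Y ∈ rOrth C (MG C (genSeqNeg C G₀) a)) : Y⟦n⟧ ∈ rOrth C (MG C (genSeqNeg C G₀) b) :=
  fun X hX => (homVanishes_shift_iff X Y (neg_add_cancel n)).1
    (hY _ (MG_genSeqNeg_shift (by omega) hX))

omit [HasCoproducts.{v} C] in
lemma rOrth_MG_genSeqNeg_mono {a b : ℤ} (h : a ≤ b) :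
    rOrth C (MG C (genSeqNeg C G₀) a) ⊆ rOrth C (MG C (genSeqNeg C G₀) b) := by
  intro Y hY
  rw [mem_rOrth_MG_genSeqNeg] at hY ⊢
  exact fun m hm => hY m (h.trans hm)

omit [HasCoproducts.{v} C] in
lemma MG_genSeqNeg_subset_shiftSet {A : ℤ} (hA : 0 < A) (i : ℤ) :
    MG C (genSeqNeg C G₀) i ⊆
      ⋃ n ∈ {n : ℤ | |n| ≤ A}, shiftSet C n (MG C (genSeqNeg C G₀) (i + 1)) := by
  intro X hX
  refine Set.mem_biUnion (x := -1) (by simp; omega) ⟨_, MG_genSeqNeg_shift rfl hX, ?_⟩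
  exact ⟨((shiftFunctorCompIsoId C (1 : ℤ) (-1) (by omega)).app X).symm⟩

theorem isGenSeq_genSeqNeg (hG : IsCompactGenerator C G₀) : IsGenSeq C (genSeqNeg C G₀) := by
  have hU : unionAll C (genSeqNeg C G₀) ⊆ compacts C :=
    Set.iUnion_subset (genSeqNeg_subset_compacts hG.1)
  refine ⟨⟨genSeqNeg_subset_compacts hG.1,
    (smd_extClosure_subset_compacts hU).antisymm fun K hK => ?_⟩, fun n X hX => ?_⟩
  · exact mem_smd_extClosure_of_isCompactObj hU (Q := fun j : ULift.{v} ℤ => G₀⟦j.down⟧)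
      (fun j => Set.mem_iUnion.2 ⟨_, shift_mem_genSeqNeg G₀ _⟩)
      (fun X hX => hG.2 X fun n => hX ⟨n⟩) hK
  · have hmem : X ∈ unionIcc C (genSeqNeg C G₀) (n - 1) (n + 1) := by
      simp only [unionIcc, Set.mem_iUnion₂, Set.mem_Icc]
      rcases hX with (⟨Y, hY, ⟨e⟩⟩ | hX) | ⟨Y, hY, ⟨e⟩⟩
      · obtain ⟨e'⟩ := genSeqNeg_shift (by omega : n + 1 + -1 = n) hY
        exact ⟨n + 1, by omega, ⟨e.trans e'⟩⟩
      · exact ⟨n, by omega, hX⟩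
      · obtain ⟨e'⟩ := genSeqNeg_shift (by omega : n - 1 + 1 = n) hY
        exact ⟨n - 1, by omega, ⟨e.trans e'⟩⟩
    exact ⟨X, .of hmem, 𝟙 X, 𝟙 X, Category.comp_id _⟩

end GeneratingSequence

section OrthogonalMetric

variable {C}

section ShiftSet

omit [HasZeroObject C] [Preadditive C] [∀ n : ℤ, (shiftFunctor C n).Additive] [Pretriangulated C]
  [HasCoproducts.{v} C]

lemma shift_mem_shiftSet {U : Set C} {X : C} (hX : X ∈ U) (n : ℤ) : X⟦n⟧ ∈ shiftSet C n U :=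
  ⟨X, hX, ⟨Iso.refl _⟩⟩

lemma shiftSet_mono {U U' : Set C} (h : U ⊆ U') (n : ℤ) : shiftSet C n U ⊆ shiftSet C n U' :=
  fun _ ⟨a, ha, e⟩ => ⟨a, h ha, e⟩

lemma shiftSet_shiftSet (U : Set C) {m n k : ℤ} (h : m + n = k) :
    shiftSet C n (shiftSet C m U) = shiftSet C k U := by
  ext X
  constructor
  · rintro ⟨a, ⟨b, hb, ⟨e'⟩⟩, ⟨e⟩⟩
    exact ⟨b, hb, ⟨(e.trans ((shiftFunctor C n).mapIso e')).trans
      ((shiftFunctorAdd' C m n k h).symm.app b)⟩⟩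
  · rintro ⟨b, hb, ⟨e⟩⟩
    exact ⟨b⟦m⟧, shift_mem_shiftSet hb m, ⟨e.trans ((shiftFunctorAdd' C m n k h).app b)⟩⟩

lemma shiftSet_natCast_subset {U : Set C} (hiso : ∀ ⦃X Y : C⦄, (X ≅ Y) → X ∈ U → Y ∈ U)
    (hU : shiftSet C 1 U ⊆ U) (n : ℕ) : shiftSet C n U ⊆ U := by
  induction n with
  | zero =>
    rintro X ⟨a, ha, ⟨e⟩⟩
    exact hiso (e.trans ((shiftFunctorZero' C _ Nat.cast_zero).app a)).symm ha
  | succ n ih =>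
    rw [← shiftSet_shiftSet U (m := n) (n := 1) (by push_cast; rfl)]
    exact (shiftSet_mono ih 1).trans hU

lemma shiftSet_antitone {U : Set C} (hiso : ∀ ⦃X Y : C⦄, (X ≅ Y) → X ∈ U → Y ∈ U)
    (hU : shiftSet C 1 U ⊆ U) {m n : ℤ} (h : m ≤ n) : shiftSet C n U ⊆ shiftSet C m U := by
  obtain ⟨k, rfl⟩ := Int.le.dest h
  rw [← shiftSet_shiftSet U (add_comm (k : ℤ) m)]
  exact shiftSet_mono (shiftSet_natCast_subset hiso hU k) m

end ShiftSet

omit [HasZeroObject C] [Pretriangulated C] [HasCoproducts.{v} C] in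
lemma shiftSet_lOrth (B : Set C) (n : ℤ) :
    shiftSet C n (lOrth C B) = lOrth C (shiftSet C n B) := by
  ext X
  rw [mem_shiftSet_iff (fun _ _ e => (mem_lOrth_congr B e).1) (add_neg_cancel n)]
  refine ⟨fun hX Y ⟨b, hb, ⟨e⟩⟩ => ?_, fun hX b hb => ?_⟩
  · exact (homVanishes_congr (Iso.refl X) e).2
      ((homVanishes_shift_iff X b (neg_add_cancel n)).1 (hX b hb))
  · exact (homVanishes_shift_iff X b (neg_add_cancel n)).2 (hX _ (shift_mem_shiftSet hb n))

omit [HasCoproducts.{v} C] in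
lemma isOrthMetric_shiftSet_lOrth {B : Set C} (hB : shiftSet C 1 (lOrth C B) ⊆ lOrth C B) :
    IsOrthMetric C fun i => shiftSet C i (lOrth C B) where
  zero_mem n X hX := by
    rw [shiftSet_lOrth]
    exact fun Y _ => homVanishes_of_isZero hX Y
  iso_closed n X Y e hX := by
    rw [shiftSet_lOrth] at hX ⊢
    exact (mem_lOrth_congr _ e).1 hX
  star_subset n := by
    rintro Y ⟨X, Z, f, g, h, hT, hX, hZ⟩
    rw [shiftSet_lOrth] at hX hZ ⊢
    exact fun W hW => HomVanishes.ext hT (hX W hW) (hZ W hW)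
  shift_one n := by
    rw [shiftSet_shiftSet _ rfl]
    exact shiftSet_antitone (fun _ _ e => (mem_lOrth_congr B e).1) hB (by omega)
  antitone n := shiftSet_antitone (fun _ _ e => (mem_lOrth_congr B e).1) hB (by omega)
  shift_neg_one n := by
    rw [shiftSet_shiftSet _ rfl]
    exact shiftSet_antitone (fun _ _ e => (mem_lOrth_congr B e).1) hB (by omega)
  orth n := by rw [shiftSet_lOrth, lOrth_rOrth_lOrth]

omit [HasCoproducts.{v} C] in
lemma IsOrthMetric.mem_of_homVanishes_shift {M : ℤ → Set C} (h : IsOrthMetric C M) {i : ℤ}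
    {D : C} (hD : ∀ Y, Y⟦(1 : ℤ)⟧ ∈ rOrth C (M i) → HomVanishes D (Y⟦(1 : ℤ)⟧)) : D ∈ M i := by
  rw [← h.orth i]
  intro Y hY
  have e : Y⟦(-1 : ℤ)⟧⟦(1 : ℤ)⟧ ≅ Y := (shiftFunctorCompIsoId C (-1 : ℤ) 1 (by omega)).app Y
  exact (homVanishes_congr (Iso.refl D) e).1 (hD _ ((mem_rOrth_congr _ e).2 hY))

end OrthogonalMetric

section OfTStructure

variable {C}

omit [HasCoproducts.{v} C] in
lemma approxTriangle.shift_of_iso {F F' : C} {S S' D : Set C} {n : ℤ} (H : approxTriangle C F S D)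
    (hS : ∀ E ∈ S, E⟦n⟧ ∈ S') (e : F' ≅ F⟦n⟧) :
    approxTriangle C F' S' (shiftSet C n D) := by
  obtain ⟨E, Z, f, g, h, hT, hE, hZ⟩ := H
  obtain ⟨f', g', h', hT'⟩ := exists_shift_triangle hT n
  refine ⟨E⟦n⟧, Z⟦n⟧, f' ≫ e.inv, e.hom ≫ g', h', ?_, hS E hE, shift_mem_shiftSet hZ n⟩
  refine isomorphic_distinguished _ hT' _ (Triangle.isoMk _ _ (Iso.refl _) e (Iso.refl _) ?_ ?_ ?_)
  · change (f' ≫ e.inv) ≫ e.hom = 𝟙 _ ≫ f'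
    simp
  · exact Category.comp_id _
  · change h' ≫ (𝟙 (E⟦n⟧))⟦(1 : ℤ)⟧' = 𝟙 _ ≫ h'
    rw [CategoryTheory.Functor.map_id, Category.comp_id, Category.id_comp]

variable {U V : Set C} {G₀ : C} {A : ℤ}

omit [HasCoproducts.{v} C] in
lemma IsTStructure.eq_lOrth (h : IsTStructure C U V) : lOrth C (shiftSet C (-1) V) = U := by
  refine Set.Subset.antisymm (fun X hX => ?_) h.orthogonal
  obtain ⟨u, v, f, g, d, hT, hu, hv⟩ := h.exists_triangle X
  have hu1v : HomVanishes (u⟦(1 : ℤ)⟧) v :=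
    h.orthogonal _ (h.shift_le (shift_mem_shiftSet hu 1)) v hv
  have hv0 : IsZero v := by
    obtain ⟨ψ, hψ⟩ : ∃ ψ : u⟦(1 : ℤ)⟧ ⟶ v, 𝟙 v = d ≫ ψ :=
      Triangle.yoneda_exact₃ _ hT (𝟙 v) <| by
        change g ≫ 𝟙 v = 0
        rw [hX v hv g, zero_comp]
    rw [IsZero.iff_id_eq_zero, hψ, hu1v ψ, comp_zero]
  have hf : IsIso f := (Triangle.isZero₃_iff_isIso₁ _ hT).1 hv0
  exact h.iso_closed_le (asIso f) hu

omit [HasCoproducts.{v} C] in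
lemma IsTStructure.isOrthMetric (h : IsTStructure C U V) :
    IsOrthMetric C fun i => shiftSet C i U := by
  have hU := h.shift_le
  rw [← h.eq_lOrth] at hU ⊢
  exact isOrthMetric_shiftSet_lOrth hU

omit [HasCoproducts.{v} C] in
lemma IsTStructure.MG_subset_shiftSet (h : IsTStructure C U V) (hA : G₀⟦A⟧ ∈ U) (i : ℤ) :
    MG C (genSeqNeg C G₀) (i + A) ⊆ shiftSet C i U := by
  rw [← h.isOrthMetric.orth i]
  refine fun X hX Y hY => mem_rOrth_MG_genSeqNeg.2 (fun m hm => hY _ ?_) X hX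
  refine shiftSet_antitone h.iso_closed_le h.shift_le (by omega : i ≤ m - A) ?_
  exact ⟨_, hA, ⟨(shiftFunctorAdd' C A (m - A) m (by omega)).app G₀⟩⟩

omit [HasZeroObject C] [Pretriangulated C] [HasCoproducts.{v} C] in
lemma homZero_genSeqNeg_shiftSet
    (hU : ∀ i : ℤ, A ≤ i → ∀ u ∈ U, HomVanishes (G₀⟦-i⟧) u) {n i : ℤ} (h : A ≤ n + i) :
    homZero C (genSeqNeg C G₀ n) (shiftSet C i U) := by
  rintro X ⟨e⟩ F ⟨u, hu, ⟨e'⟩⟩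
  refine (homVanishes_congr e e').2 ((homVanishes_shift_iff _ u (neg_add_cancel i)).1 ?_)
  exact (homVanishes_congr ((shiftFunctorAdd' C (-n) (-i) (-(n + i)) (by omega)).app G₀)
    (Iso.refl u)).1 (hU _ h u hu)

lemma IsTStructure.isGPreApprox (h : IsTStructure C U V) (hG : IsCompactObj C G₀) (hA : 0 < A)
    (hGU : G₀⟦A⟧ ∈ U) (hU : ∀ i : ℤ, A ≤ i → ∀ u ∈ U, HomVanishes (G₀⟦-i⟧) u) :
    IsGPreApprox C (genSeqNeg C G₀) (fun i => shiftSet C i U) A where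
  orthMetric := h.isOrthMetric
  A_pos := hA
  cond0 := MG_genSeqNeg_subset_shiftSet hA
  cond1 i := Set.subset_inter (h.MG_subset_shiftSet hGU i) (MG_genSeqNeg_subset_compacts hG _)
  cond2 n := ⟨A - n, fun _ hi => homZero_genSeqNeg_shiftSet hU (by omega)⟩

omit [HasCoproducts.{v} C] in
lemma approxTriangle_shiftSet {S S' : Set C} {i : ℤ} (hS : ∀ E ∈ S, E⟦i⟧ ∈ S')
    (hU : ∀ F ∈ U, approxTriangle C F S (shiftSet C 1 U)) :
    ∀ F ∈ shiftSet C i U, approxTriangle C F S' (shiftSet C (i + 1) U) := by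
  rintro F ⟨a, ha, ⟨e⟩⟩
  rw [← shiftSet_shiftSet U (add_comm 1 i)]
  exact (hU a ha).shift_of_iso hS e

theorem WeaklyApproximable.exists_isWeakGApprox (hG : IsCompactObj C G₀)
    (H : WeaklyApproximable C G₀) :
    ∃ (Rm : ℤ → Set C) (A : ℤ), IsWeakGApprox C (genSeqNeg C G₀) Rm A := by
  obtain ⟨A, U, V, hA, h, hGU, hU, happ⟩ := H
  refine ⟨fun i => shiftSet C i U, A, h.isGPreApprox hG hA hGU hU,
    fun n i => homZero_genSeqNeg_shiftSet hU,
    fun i => approxTriangle_shiftSet (fun E hE => ?_) happ⟩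
  rw [gBarInt, unionIcc_genSeqPos] at hE
  exact bigClosure_shift (unionIcc_genSeqNeg_shift _ _ i) hE

theorem Approximable.exists_isGApprox (hG : IsCompactObj C G₀) (H : Approximable C G₀) :
    ∃ (Rm : ℤ → Set C) (A : ℤ), IsGApprox C (genSeqNeg C G₀) Rm A := by
  obtain ⟨A, U, V, hA, h, hGU, hU, happ⟩ := H
  have happ' : ∀ i, ∀ F ∈ shiftSet C i U, approxTriangle C F
      (gBarIntPow C (genSeqNeg C G₀) (-A - i) (A - i) A) (shiftSet C (i + 1) U) := by
    refine fun i => approxTriangle_shiftSet (fun E hE => ?_) happ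
    rw [gBarIntPow, unionIcc_genSeqPos] at hE
    exact shift_mem_smd (shift_mem_coprodPowBig (unionIcc_genSeqNeg_shift _ _ i) _) hE
  refine ⟨fun i => shiftSet C i U, A, ⟨h.isGPreApprox hG hA hGU hU,
    fun n i => homZero_genSeqNeg_shiftSet hU, fun i F hF => ?_⟩, happ'⟩
  obtain ⟨E, D, f, g, d, hT, hE, hD⟩ := happ' i F hF
  exact ⟨E, D, f, g, d, hT, bigClosure_of_mem_smd_coprodPowBig hE, hD⟩

end OfTStructure

section Tower

variable {C}

lemma homVanishes_hocolim_of_eventually {E : ℕ → C} {e : ∀ n, E n ⟶ E (n + 1)} {H K : C}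
    {π : seqCoprod C E ⟶ H} {δ : H ⟶ (seqCoprod C E)⟦(1 : ℤ)⟧} (hH : IsHocolim C E e H π δ)
    (hK : IsCompactObj C K) {N : ℕ} (hE : ∀ n, N ≤ n → HomVanishes K (E n)) :
    HomVanishes K H := by
  have hdies : ∀ k n (x : K ⟶ E n), N ≤ n + k → x ≫ seqInj C E n ≫ π = 0 := by
    intro k
    induction k with
    | zero => exact fun n x hn => by rw [hE n hn x, zero_comp]
    | succ k ih =>
      intro n x hn
      rw [hH.seqInj_comp, ← Category.assoc]
      exact ih (n + 1) (x ≫ e n) (by omega)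
  exact homVanishes_hocolim hH hK fun n x => hdies N n x (Nat.le_add_left N n)

lemma homVanishes_of_tower {J : Type*} {Q : J → C} (hQ : ∀ j, IsCompactObj C (Q j))
    (hgen : ∀ X, (∀ j, HomVanishes (Q j) X) → IsZero X) {P : ℕ → Set C} {Y : C}
    (step : ∀ n, ∀ D ∈ P n, ∃ D' ∈ P (n + 1), ∃ e : D ⟶ D', FibreOrth e Y)
    (van : ∀ j, ∃ N, ∀ n, N ≤ n → ∀ D ∈ P n, HomVanishes (Q j) D) {F : C} (hF : F ∈ P 0) :
    HomVanishes F Y := fun f => by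
  choose next hnext map hmap using step
  let E : ∀ n, P n := fun n =>
    Nat.rec (motive := fun n => P n) ⟨F, hF⟩ (fun n D => ⟨next n D D.2, hnext n D D.2⟩) n
  let e : ∀ n, (E n : C) ⟶ E (n + 1) := fun n => map n (E n) (E n).2
  obtain ⟨H, π, δ, hH⟩ := distinguished_cocone_triangle (oneMinusShift C (fun n => (E n : C)) e)
  have hH0 : IsZero H := hgen H fun j => by
    obtain ⟨N, hN⟩ := van j
    exact homVanishes_hocolim_of_eventually hH (hQ j) fun n hn => hN n hn _ (E n).2
  have hfib := IsHocolim.fibreOrth hH (Y := Y) fun n => hmap n (E n) (E n).2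
  obtain ⟨ψ, rfl⟩ := hfib.1 f
  rw [hH0.eq_of_src ψ 0, comp_zero]

end Tower

section ApproxBy

variable {C}

/-- `F` receives a map from an object of `T` whose homotopy fibre is left orthogonal to `S`.
Having such a map is equivalent to having a triangle `W ⟶ F ⟶ D` with `W ∈ T` and `D` left
orthogonal to `ΣS`. -/
def ApproxBy (T S : Set C) (F : C) : Prop :=
  ∃ (W : C) (p : W ⟶ F), W ∈ T ∧ ∀ Y ∈ S, FibreOrth p Y

omit [HasCoproducts.{v} C] in
lemma exists_pullback_triangle {X Y Z Z' : C} {f : X ⟶ Y} {g : Y ⟶ Z} {h : Z ⟶ X⟦(1 : ℤ)⟧}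
    (hT : Triangle.mk f g h ∈ distTriang C) (c : Z' ⟶ Z) :
    ∃ (Y' : C) (f' : X ⟶ Y') (g' : Y' ⟶ Z') (b : Y' ⟶ Y),
      Triangle.mk f' g' (c ≫ h) ∈ distTriang C ∧ f' ≫ b = f ∧ b ≫ g = g' ≫ c ∧
        ∀ W, FibreOrth c W → FibreOrth b W := by
  obtain ⟨Y', f', g', hT'⟩ := distinguished_cocone_triangle₂ (c ≫ h)
  obtain ⟨b, hb, hb'⟩ : ∃ b : Y' ⟶ Y, f' ≫ b = 𝟙 X ≫ f ∧ g' ≫ c = b ≫ g :=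
    complete_distinguished_triangle_morphism₂ _ _ hT' hT (𝟙 X) c <| by
      change (c ≫ h) ≫ (𝟙 X)⟦(1 : ℤ)⟧' = c ≫ h
      rw [CategoryTheory.Functor.map_id, Category.comp_id]
  rw [Category.id_comp] at hb
  exact ⟨Y', f', g', b, hT', hb, hb'.symm, fun W => .middle_of_third hT' hT hb hb'.symm rfl⟩

omit [HasCoproducts.{v} C] in
lemma ApproxBy.approxTriangle {T S : Set C} {F : C} (H : ApproxBy T S F) :
    approxTriangle C F T (shiftSet C 1 (lOrth C S)) := by
  obtain ⟨W, p, hW, hp⟩ := H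
  obtain ⟨D, g, d, hT⟩ := distinguished_cocone_triangle p
  refine ⟨W, D, p, g, d, hT, hW, ?_⟩
  rw [shiftSet_lOrth]
  rintro Y' ⟨Y, hY, ⟨e⟩⟩
  exact (homVanishes_congr (Iso.refl D) e).2 ((fibreOrth_iff_cone hT).1 (hp Y hY))

lemma ApproxBy.ext_bigClosure {U S : Set C} {E F D : C} {f : E ⟶ F} {g : F ⟶ D}
    {h : D ⟶ E⟦(1 : ℤ)⟧} (hT : Triangle.mk f g h ∈ distTriang C) (hE : bigClosure C U E)
    (hD : ApproxBy {X | bigClosure C U X} S D) : ApproxBy {X | bigClosure C U X} S F := by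
  obtain ⟨W, p, hW, hp⟩ := hD
  obtain ⟨W', f', g', p', hT', -, -, hp'⟩ := exists_pullback_triangle hT p
  exact ⟨W', p', .ext f' g' _ hT' hE hW, fun Y hY => hp' Y (hp Y hY)⟩

variable {U S B : Set C} {n : ℕ}

-- The lift `s` of `f` through the approximation is what allows a direct summand of `E` to be
-- split off again in `approxBy_of_mem_smd`.
lemma exists_approx_lift
    (hB : ∀ D, (∀ Y ∈ B, HomVanishes D (Y⟦(1 : ℤ)⟧)) → ApproxBy (smd C (coprodPowBig C U n)) S D)
    (m : ℕ) : ∀ {E F : C} (f : E ⟶ F), E ∈ coprodPowBig C U m → (∀ Y ∈ B, FibreOrth f Y) →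
      ∃ (W : C) (p : W ⟶ F) (s : E ⟶ W), W ∈ smd C (coprodPowBig C U (m + n)) ∧ s ≫ p = f ∧
        ∀ Y ∈ S, FibreOrth p Y := by
  induction m with
  | zero =>
    intro E F f hE hf
    have hE0 : IsZero E := hE
    obtain ⟨W, p, hW, hp⟩ := hB F fun Y hY χ => (hf Y hY).2 χ (hE0.eq_of_src _ _)
    exact ⟨W, p, 0, by rwa [Nat.zero_add], hE0.eq_of_src _ _, hp⟩
  | succ m ih =>
    rintro E F f ⟨X, E', i, q, d, hT, hX, hE'⟩ hf
    obtain ⟨F', b, c, hF⟩ := distinguished_cocone_triangle (i ≫ f)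
    obtain ⟨f', hf', hc⟩ : ∃ f' : E' ⟶ F', q ≫ f' = f ≫ b ∧ d ≫ (𝟙 X)⟦(1 : ℤ)⟧' = f' ≫ c :=
      complete_distinguished_triangle_morphism _ _ hT hF (𝟙 X) f (Category.id_comp _).symm
    rw [CategoryTheory.Functor.map_id, Category.comp_id] at hc
    obtain ⟨W', p', s', hW', hs', hp'⟩ := ih f' hE' fun Y hY =>
      .third_of_middle hT hF rfl hf'.symm hc.symm (hf Y hY)
    obtain ⟨W, i', q', p, hW, hip, hpb, hp⟩ := exists_pullback_triangle hF p'
    have hqd : q ≫ d = 0 := comp_distTriang_mor_zero₂₃ _ hT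
    obtain ⟨s₀, hs₀⟩ : ∃ s₀ : E ⟶ W, q ≫ s' = s₀ ≫ q' :=
      Triangle.coyoneda_exact₃ _ hW (q ≫ s') <| by
        change (q ≫ s') ≫ p' ≫ c = 0
        rw [Category.assoc, reassoc_of% hs', ← hc, hqd]
    obtain ⟨z, hz⟩ : ∃ z : E ⟶ X, f - s₀ ≫ p = z ≫ i ≫ f :=
      Triangle.coyoneda_exact₂ _ hF _ <| by
        change (f - s₀ ≫ p) ≫ b = 0
        rw [Preadditive.sub_comp, Category.assoc, hpb, ← reassoc_of% hs₀, hs', hf', sub_self]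
    refine ⟨W, p, s₀ + z ≫ i', ?_, ?_, fun Y hY => hp Y (hp' Y hY)⟩
    · rw [Nat.succ_add_eq_add_succ]
      exact mem_smd_starSet hW hX hW'
    · rw [Preadditive.add_comp, Category.assoc, hip, ← hz, add_sub_cancel]

lemma approxBy_of_mem_smd
    (hB : ∀ D, (∀ Y ∈ B, HomVanishes D (Y⟦(1 : ℤ)⟧)) → ApproxBy (smd C (coprodPowBig C U n)) S D)
    {m : ℕ} {E F : C} {f : E ⟶ F} (hE : E ∈ smd C (coprodPowBig C U m))
    (hf : ∀ Y ∈ B, FibreOrth f Y) : ApproxBy (smd C (coprodPowBig C U (m + n))) S F := by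
  obtain ⟨E', hE', i, r, hir⟩ := hE
  obtain ⟨Z, e, -⟩ := exists_iso_biprod_of_retract hir
  obtain ⟨W, p, s, hW, hs, hp⟩ := exists_approx_lift hB m (e.hom ≫ biprod.map f (𝟙 Z)) hE'
    fun Y hY => ((hf Y hY).biprod_map_id Z).iso_comp e
  have hζ : (biprod.inr ≫ e.inv ≫ s) ≫ p = biprod.inr := by
    rw [Category.assoc, Category.assoc, hs, Iso.inv_hom_id_assoc, biprod.inr_map, Category.id_comp]
  obtain ⟨W₀, e', he'⟩ : ∃ (W₀ : C) (e' : W ≅ Z ⊞ W₀), (biprod.inr ≫ e.inv ≫ s) ≫ e'.hom = _ :=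
    exists_iso_biprod_of_retract (r := p ≫ biprod.snd) <| by
      rw [← Category.assoc, hζ, biprod.inr_snd]
  have hp₀ : biprod.inl ≫ e'.inv ≫ p = biprod.inr := by
    rw [← he', Category.assoc, Iso.hom_inv_id_assoc, hζ]
  refine ⟨W₀, biprod.inr ≫ (e'.inv ≫ p) ≫ biprod.fst, ?_, fun Y hY => ?_⟩
  · exact smd_of_retract hW (i := biprod.inr ≫ e'.inv) (r := e'.hom ≫ biprod.snd) (by simp)
  · exact ((hp Y hY).iso_comp e'.symm).of_biprod hp₀

end ApproxBy

section ToTStructure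

variable {C} {G₀ : C}

lemma isTStructure_RG_genSeqNeg (hG : IsCompactObj C G₀) (a : ℤ) :
    IsTStructure C (RG C (genSeqNeg C G₀) a)
      (shiftSet C 1 (rOrth C (MG C (genSeqNeg C G₀) a))) := by
  have hiso : ∀ ⦃X Y : C⦄, (X ≅ Y) → X ∈ rOrth C (MG C (genSeqNeg C G₀) a) →
      Y ∈ rOrth C (MG C (genSeqNeg C G₀) a) := fun _ _ e => (mem_rOrth_congr _ e).1
  have hshift : ∀ {X : C}, X ∈ shiftSet C (-1) (shiftSet C 1 (rOrth C (MG C (genSeqNeg C G₀) a))) ↔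
      X ∈ rOrth C (MG C (genSeqNeg C G₀) a) := fun {X} => by
    rw [shiftSet_shiftSet _ (add_neg_cancel 1), mem_shiftSet_iff hiso (add_zero 0)]
    exact mem_rOrth_congr _ ((shiftFunctorZero C ℤ).app X)
  have hneg : ∀ Y ∈ rOrth C (MG C (genSeqNeg C G₀) a),
      Y⟦(-1 : ℤ)⟧ ∈ rOrth C (MG C (genSeqNeg C G₀) a) := fun Y hY =>
    rOrth_MG_genSeqNeg_mono (by omega) (rOrth_MG_genSeqNeg_shift rfl hY)
  refine ⟨fun X Y e => (mem_lOrth_congr _ e).1, ?_, ?_, ?_, fun X hX Y hY => hX Y (hshift.1 hY), ?_⟩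
  · rintro X Y e ⟨b, hb, ⟨e'⟩⟩
    exact ⟨b, hb, ⟨e.symm.trans e'⟩⟩
  · rintro X ⟨b, hb, ⟨e⟩⟩ Y hY
    exact (homVanishes_congr e (Iso.refl Y)).2
      ((homVanishes_shift_iff b Y (add_neg_cancel 1)).2 (hb _ (hneg Y hY)))
  · exact shiftSet_mono (fun Y hY => (mem_shiftSet_iff hiso (add_neg_cancel 1)).2 (hneg Y hY)) 1
  · intro t
    obtain ⟨u, v, f, g, h, hT, hu, hv⟩ :=
      exists_truncation_triangle (Q := fun j : ULift.{v} ℕ => G₀⟦a + (j.down : ℤ)⟧)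
        (fun j => isCompactObj_shift hG _) t
    refine ⟨u, v, f, g, h, hT, fun Y hY => hu Y fun j => ?_,
      hshift.2 (mem_rOrth_MG_genSeqNeg.2 fun m hm => ?_)⟩
    · exact mem_rOrth_MG_genSeqNeg.1 hY _ (by omega)
    · obtain ⟨k, rfl⟩ := Int.le.dest hm
      exact hv ⟨k⟩

variable {Rm : ℤ → Set C} {A : ℤ}

lemma IsGPreApprox.RG_subset (h : IsGPreApprox C (genSeqNeg C G₀) Rm A) :
    RG C (genSeqNeg C G₀) A ⊆ Rm 0 := by
  rw [← h.orthMetric.orth 0]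
  refine lOrth_anti (rOrth_anti fun X hX => (h.cond1 0 ?_).1)
  rwa [zero_add]

lemma IsWeakGApprox.subset_lOrth (hgen : IsCompactGenerator C G₀)
    (h : IsWeakGApprox C (genSeqNeg C G₀) Rm A) {i a : ℤ} (ha : i - A = a) :
    Rm i ⊆ lOrth C (rOrth C (MG C (genSeqNeg C G₀) a)) := by
  intro F hF Y hY
  refine homVanishes_of_tower (Q := fun n : ℤ => G₀⟦n⟧) (P := fun k : ℕ => Rm (i + k))
    (fun n => isCompactObj_shift hgen.1 n) hgen.2 (fun k D hD => ?_) (fun n => ?_)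
    (by simpa using hF)
  · obtain ⟨E, D', f, g, d, hT, hE, hD'⟩ := h.approx _ D hD
    refine ⟨D', by push_cast; rwa [← add_assoc], g, (fibreOrth_iff_fibre hT).2 ?_⟩
    refine homVanishes_of_bigClosure (fun X hX => ?_) hE
    obtain ⟨m, hm, ⟨e⟩⟩ := Set.mem_iUnion₂.1 hX
    rw [Set.mem_Icc] at hm
    exact (homVanishes_congr e (Iso.refl Y)).2 (mem_rOrth_MG_genSeqNeg.1 hY _ (by omega))
  · exact ⟨(A + n - i).toNat, fun k hk D =>
      h.hom_vanish (-n) (i + k) (by omega) _ (shift_mem_genSeqNeg G₀ n) D⟩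

-- For `F ∈ Rm (2 * A + 1)` the map from a zero object is already an approximation, so it suffices
-- to peel off one approximating triangle at each of the levels `0, …, 2 * A`.
lemma IsWeakGApprox.approxBy_of_step (hgen : IsCompactGenerator C G₀)
    (h : IsWeakGApprox C (genSeqNeg C G₀) Rm A) {T : ℕ → Set C} (zero : ∀ W, IsZero W → W ∈ T 0)
    (step : ∀ k i, 0 ≤ i → i ≤ 2 * A →
      (∀ D ∈ Rm (i + 1), ApproxBy (T k) (rOrth C (MG C (genSeqNeg C G₀) A)) D) →
      ∀ F ∈ Rm i, ApproxBy (T (k + 1)) (rOrth C (MG C (genSeqNeg C G₀) A)) F) {k : ℕ} :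
    ∀ i : ℤ, 0 ≤ i → i + k = 2 * A + 1 →
      ∀ F ∈ Rm i, ApproxBy (T k) (rOrth C (MG C (genSeqNeg C G₀) A)) F := by
  induction k with
  | zero =>
    intro i _ hik F hF
    obtain ⟨W, hW⟩ := HasZeroObject.zero (C := C)
    exact ⟨W, 0, zero W hW, fun Y hY => fibreOrth_zero hW <|
      h.subset_lOrth hgen (by omega : i - A = A + 1) hF _ (rOrth_MG_genSeqNeg_shift rfl hY)⟩
  | succ k ih =>
    intro i hi hik
    exact step k i hi (by omega) (ih (i + 1) (by omega) (by omega))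

lemma IsWeakGApprox.exists_tStructure (h : IsWeakGApprox C (genSeqNeg C G₀) Rm A)
    (hG : IsCompactObj C G₀) {A' : ℤ} (hA' : A ≤ A') {T : Set C}
    (hT : ∀ F ∈ Rm 0, ApproxBy T (rOrth C (MG C (genSeqNeg C G₀) A)) F) :
    ∃ U V : Set C, 0 < A' ∧ IsTStructure C U V ∧ G₀⟦A'⟧ ∈ U ∧
      (∀ i, A' ≤ i → ∀ X ∈ U, HomVanishes (G₀⟦-i⟧) X) ∧
      ∀ F ∈ U, approxTriangle C F T (shiftSet C 1 U) :=
  ⟨_, _, h.A_pos.trans_le hA', isTStructure_RG_genSeqNeg hG A,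
    subset_lOrth_rOrth _ (shift_mem_MG hA'),
    fun i hi X hX => h.hom_vanish i 0 (by omega) _ ⟨Iso.refl _⟩ X (h.RG_subset hX),
    fun F hF => (hT F (h.RG_subset hF)).approxTriangle⟩

theorem IsWeakGApprox.weaklyApproximable (hgen : IsCompactGenerator C G₀)
    (h : IsWeakGApprox C (genSeqNeg C G₀) Rm A) : WeaklyApproximable C G₀ := by
  have hA := h.A_pos
  refine ⟨3 * A, h.exists_tStructure hgen.1 (by omega) (h.approxBy_of_step hgen
    (T := fun _ => gBarInt C (genSeqPos C G₀) (-(3 * A)) (3 * A)) (k := (2 * A + 1).toNat)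
    (fun _ => .zero) ?_ 0 le_rfl (by omega))⟩
  intro _ i hi hi' hD F hF
  obtain ⟨E, D, f, g, d, hT, hE, hDm⟩ := h.approx i F hF
  refine .ext_bigClosure hT (bigClosure_mono ?_ hE) (hD D hDm)
  rw [unionIcc_genSeqPos]
  exact unionIcc_mono _ (by omega) (by omega)

theorem IsGApprox.approximable (hgen : IsCompactGenerator C G₀)
    (h : IsGApprox C (genSeqNeg C G₀) Rm A) : Approximable C G₀ := by
  have hA := h.A_pos
  set A' := (2 * A + 1) * A with hA'
  have hle : 3 * A ≤ A' := by nlinarith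
  have key := h.approxBy_of_step hgen (k := (2 * A + 1).toNat)
    (T := fun k => smd C
      (coprodPowBig C (unionIcc C (genSeqPos C G₀) (-A') A') (k * A.toNat)))
    (fun W hW => ⟨W, by rwa [Nat.zero_mul], 𝟙 W, 𝟙 W, Category.comp_id _⟩) ?_ 0 le_rfl (by omega)
  · refine ⟨A', h.exists_tStructure hgen.1 (by omega) ?_⟩
    rwa [gBarIntPow, hA', Int.toNat_mul (by omega) (by omega)]
  intro k i hi hi' hD F hF
  obtain ⟨E, D, f, g, d, hT, hE, hDm⟩ := h.approx' i F hF
  rw [Nat.succ_mul, Nat.add_comm]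
  refine approxBy_of_mem_smd (B := {Y | Y⟦(1 : ℤ)⟧ ∈ rOrth C (Rm (i + 1))})
    (fun D hD' => hD D (h.orthMetric.mem_of_homVanishes_shift hD')) (smd_mono ?_ hE)
    fun Y hY => (fibreOrth_iff_cone hT).2 (hY D hDm)
  rw [unionIcc_genSeqPos]
  exact coprodPowBig_mono (unionIcc_mono _ (by omega) (by omega)) _

end ToTStructure

theorem statement_13 (G₀ : C)
    (hcg : CompactlyGenerated C) (hgen : IsCompactGenerator C G₀) :
    IsGenSeq C (genSeqNeg C G₀) ∧
    (WeaklyApproximable C G₀ ↔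
      ∃ (Rm : ℤ → Set C) (A : ℤ), IsWeakGApprox C (genSeqNeg C G₀) Rm A) ∧
    (Approximable C G₀ ↔
      ∃ (Rm : ℤ → Set C) (A : ℤ), IsGApprox C (genSeqNeg C G₀) Rm A) := by
  exact ⟨isGenSeq_genSeqNeg hgen,
    ⟨fun H => H.exists_isWeakGApprox hgen.1, fun ⟨_, _, h⟩ => h.weaklyApproximable hgen⟩,
    ⟨fun H => H.exists_isGApprox hgen.1, fun ⟨_, _, h⟩ => h.approximable hgen⟩⟩

end GApprox
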